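/- arXiv:1903.02952 — 2 statements merged into one kernel-verified Lean document; each statement's English description precedes it below -/
import Mathlib

section
/- Let R be a Leibniz conformal algebra, Q a ℂ[∂]-module, and let Ω(R,Q) = (↼_λ, ⇀_λ, ◁_λ, ▷_λ, f_λ, {·_λ·}) and Ω'(R,Q) = (↼'_λ, ⇀'_λ, ◁'_λ, ▷'_λ, f'_λ, {·_λ·}') be two Leibniz conformal extending structures of R by Q, with unified products R♮Q and R♮'Q. Then there is a Leibniz conformal algebra isomorphism R♮Q → R♮'Q stabilizing R if and only if Ω(R,Q) ≡ Ω'(R,Q), and there is a Leibniz conformal algebra isomorphism R♮Q → R♮'Q stabilizing R and co-stabilizing Q if and only if Ω(R,Q) ≈ Ω'(R,Q). -/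
noncomputable section

/-- `g : ℂ → R` is (the evaluation of) a polynomial in `λ` with coefficients in `R`,
i.e. an element of `R[λ]`. -/
def IsPolyFun {R : Type*} [AddCommGroup R] [Module ℂ R] (g : ℂ → R) : Prop :=
  ∃ (N : ℕ) (c : ℕ → R), ∀ l : ℂ, g l = ∑ i ∈ Finset.range N, l ^ i • c i

/-- A conformal bilinear map `U × V → W[λ]`, in evaluated form: `f_λ(∂u, v) = -λ f_λ(u,v)`
and `f_λ(u, ∂v) = (∂ + λ) f_λ(u,v)`. -/
structure IsConformalBilin {U V W : Type*}
    [AddCommGroup U] [Module ℂ U] [AddCommGroup V] [Module ℂ V]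
    [AddCommGroup W] [Module ℂ W]
    (DU : Module.End ℂ U) (DV : Module.End ℂ V) (DW : Module.End ℂ W)
    (f : ℂ → U → V → W) : Prop where
  add_left : ∀ (l : ℂ) (a a' : U) (b : V), f l (a + a') b = f l a b + f l a' b
  smul_left : ∀ (l c : ℂ) (a : U) (b : V), f l (c • a) b = c • f l a b
  add_right : ∀ (l : ℂ) (a : U) (b b' : V), f l a (b + b') = f l a b + f l a b'
  smul_right : ∀ (l c : ℂ) (a : U) (b : V), f l a (c • b) = c • f l a b
  poly : ∀ (a : U) (b : V), IsPolyFun (fun l => f l a b)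
  conf_left : ∀ (l : ℂ) (a : U) (b : V), f l (DU a) b = (-l) • f l a b
  conf_right : ∀ (l : ℂ) (a : U) (b : V), f l a (DV b) = DW (f l a b) + l • f l a b

/-- A Leibniz conformal algebra structure on the `ℂ[∂]`-module `(R, D)`:
a conformal bilinear `λ`-bracket satisfying the Jacobi identity. -/
structure IsLeibnizConformal {R : Type*} [AddCommGroup R] [Module ℂ R]
    (D : Module.End ℂ R) (br : ℂ → R → R → R) : Prop where
  bilin : IsConformalBilin D D D br
  jacobi : ∀ (l m : ℂ) (a b c : R),
    br l a (br m b c) = br (l + m) (br l a b) c + br m b (br l a c)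

/-- An extending datum `Ω(R,Q) = (↼, ⇀, ◁, ▷, f, {·_λ·})` of a Leibniz conformal algebra
`R` by a `ℂ[∂]`-module `Q`: six conformal bilinear maps.  Here `lh = ↼`, `rh = ⇀`,
`lt = ◁`, `rt = ▷`, `fm = f`, `bq = {·_λ·}`. -/
structure IsExtendingDatum {R Q : Type*}
    [AddCommGroup R] [Module ℂ R] [AddCommGroup Q] [Module ℂ Q]
    (DR : Module.End ℂ R) (DQ : Module.End ℂ Q)
    (lh : ℂ → R → Q → R) (rh : ℂ → R → Q → Q)
    (lt : ℂ → Q → R → Q) (rt : ℂ → Q → R → R)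
    (fm : ℂ → Q → Q → R) (bq : ℂ → Q → Q → Q) : Prop where
  lh_bilin : IsConformalBilin DR DQ DR lh
  rh_bilin : IsConformalBilin DR DQ DQ rh
  lt_bilin : IsConformalBilin DQ DR DQ lt
  rt_bilin : IsConformalBilin DQ DR DR rt
  fm_bilin : IsConformalBilin DQ DQ DR fm
  bq_bilin : IsConformalBilin DQ DQ DQ bq

/-- The unified product bracket on `R × Q`:
`[(a,x)_λ (b,y)] = ([a_λ b] + a↼_λ y + x▷_λ b + f_λ(x,y), a⇀_λ y + x◁_λ b + {x_λ y})`. -/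
def unifiedBracket {R Q : Type*}
    [AddCommGroup R] [Module ℂ R] [AddCommGroup Q] [Module ℂ Q]
    (br : ℂ → R → R → R)
    (lh : ℂ → R → Q → R) (rh : ℂ → R → Q → Q)
    (lt : ℂ → Q → R → Q) (rt : ℂ → Q → R → R)
    (fm : ℂ → Q → Q → R) (bq : ℂ → Q → Q → Q) :
    ℂ → R × Q → R × Q → R × Q :=
  fun l p q =>
    (br l p.1 q.1 + lh l p.1 q.2 + rt l p.2 q.1 + fm l p.2 q.2,
     rh l p.1 q.2 + lt l p.2 q.1 + bq l p.2 q.2)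

/-- `φ` commutes with the `ℂ[∂]`-module structure, i.e. is a `ℂ[∂]`-module map. -/
def PreservesD {E : Type*} [AddCommGroup E] [Module ℂ E]
    (D : Module.End ℂ E) (φ : E →ₗ[ℂ] E) : Prop :=
  ∀ u : E, φ (D u) = D (φ u)

/-- `φ` intertwines the two `λ`-brackets. -/
def IsBracketHom {E : Type*} [AddCommGroup E] [Module ℂ E]
    (br br' : ℂ → E → E → E) (φ : E →ₗ[ℂ] E) : Prop :=
  ∀ (l : ℂ) (u v : E), φ (br l u v) = br' l (φ u) (φ v)

/-- `φ : R ⊕ Q → R ⊕ Q` stabilizes `R`. -/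
def StabilizesFst {R Q : Type*} [AddCommGroup R] [Module ℂ R] [AddCommGroup Q] [Module ℂ Q]
    (φ : R × Q →ₗ[ℂ] R × Q) : Prop :=
  ∀ a : R, φ (a, 0) = (a, 0)

/-- `φ : R ⊕ Q → R ⊕ Q` co-stabilizes `Q`. -/
def CoStabilizesSnd {R Q : Type*} [AddCommGroup R] [Module ℂ R] [AddCommGroup Q] [Module ℂ Q]
    (φ : R × Q →ₗ[ℂ] R × Q) : Prop :=
  ∀ p : R × Q, (φ p).2 = p.2

/-- The extending datum `(lh, rh, lt, rt, fm, bq)` is obtained from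
`(lh', rh', lt', rt', fm', bq')` via the pair `(u, v)` (Definition 3.5 of the paper). -/
def DatumEquivVia {R Q : Type*}
    [AddCommGroup R] [Module ℂ R] [AddCommGroup Q] [Module ℂ Q]
    (DR : Module.End ℂ R) (DQ : Module.End ℂ Q) (br : ℂ → R → R → R)
    (lh : ℂ → R → Q → R) (rh : ℂ → R → Q → Q)
    (lt : ℂ → Q → R → Q) (rt : ℂ → Q → R → R)
    (fm : ℂ → Q → Q → R) (bq : ℂ → Q → Q → Q)
    (lh' : ℂ → R → Q → R) (rh' : ℂ → R → Q → Q)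
    (lt' : ℂ → Q → R → Q) (rt' : ℂ → Q → R → R)
    (fm' : ℂ → Q → Q → R) (bq' : ℂ → Q → Q → Q)
    (u : Q →ₗ[ℂ] R) (v : Q ≃ₗ[ℂ] Q) : Prop :=
  (∀ q : Q, u (DQ q) = DR (u q)) ∧
  (∀ q : Q, v (DQ q) = DQ (v q)) ∧
  (∀ (l : ℂ) (a : R) (x : Q), rh l a x = v.symm (rh' l a (v x))) ∧
  (∀ (l : ℂ) (a : R) (x : Q),
      lh l a x = br l a (u x) + lh' l a (v x) - u (rh l a x)) ∧
  (∀ (l : ℂ) (x : Q) (a : R), lt l x a = v.symm (lt' l (v x) a)) ∧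
  (∀ (l : ℂ) (x : Q) (a : R),
      rt l x a = br l (u x) a + rt' l (v x) a - u (lt l x a)) ∧
  (∀ (l : ℂ) (x y : Q),
      bq l x y = v.symm (rh' l (u x) (v y)) + v.symm (lt' l (v x) (u y))
        + v.symm (bq' l (v x) (v y))) ∧
  (∀ (l : ℂ) (x y : Q),
      fm l x y = br l (u x) (u y) + lh' l (u x) (v y) + rt' l (v x) (u y)
        + fm' l (v x) (v y) - u (bq l x y))

theorem IsConformalBilin.zero_left {U V W : Type*}
    [AddCommGroup U] [Module ℂ U] [AddCommGroup V] [Module ℂ V]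
    [AddCommGroup W] [Module ℂ W]
    {DU : Module.End ℂ U} {DV : Module.End ℂ V} {DW : Module.End ℂ W}
    {f : ℂ → U → V → W} (h : IsConformalBilin DU DV DW f) (l : ℂ) (b : V) :
    f l 0 b = 0 := by
  simpa using h.smul_left l 0 0 b

theorem IsConformalBilin.zero_right {U V W : Type*}
    [AddCommGroup U] [Module ℂ U] [AddCommGroup V] [Module ℂ V]
    [AddCommGroup W] [Module ℂ W]
    {DU : Module.End ℂ U} {DV : Module.End ℂ V} {DW : Module.End ℂ W}
    {f : ℂ → U → V → W} (h : IsConformalBilin DU DV DW f) (l : ℂ) (a : U) :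
    f l a 0 = 0 := by
  simpa using h.smul_right l 0 a 0

theorem core_iff
    {R Q : Type*} [AddCommGroup R] [Module ℂ R] [AddCommGroup Q] [Module ℂ Q]
    (DR : Module.End ℂ R) (DQ : Module.End ℂ Q)
    (br : ℂ → R → R → R) (hb : IsConformalBilin DR DR DR br)
    (lh : ℂ → R → Q → R) (rh : ℂ → R → Q → Q)
    (lt : ℂ → Q → R → Q) (rt : ℂ → Q → R → R)
    (fm : ℂ → Q → Q → R) (bq : ℂ → Q → Q → Q)
    (lh' : ℂ → R → Q → R) (rh' : ℂ → R → Q → Q)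
    (lt' : ℂ → Q → R → Q) (rt' : ℂ → Q → R → R)
    (fm' : ℂ → Q → Q → R) (bq' : ℂ → Q → Q → Q)
    (hd : IsExtendingDatum DR DQ lh rh lt rt fm bq)
    (hd' : IsExtendingDatum DR DQ lh' rh' lt' rt' fm' bq')
    (u : Q →ₗ[ℂ] R) (v : Q ≃ₗ[ℂ] Q) (φ : R × Q →ₗ[ℂ] R × Q)
    (hφ : ∀ p, φ p = (p.1 + u p.2, v p.2)) :
    (PreservesD (LinearMap.prodMap DR DQ) φ ∧
        IsBracketHom (unifiedBracket br lh rh lt rt fm bq)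
          (unifiedBracket br lh' rh' lt' rt' fm' bq') φ) ↔
      DatumEquivVia DR DQ br lh rh lt rt fm bq lh' rh' lt' rt' fm' bq' u v := by
  obtain ⟨h1, h2, h3, h4, h5, h6⟩ := hd
  obtain ⟨k1, k2, k3, k4, k5, k6⟩ := hd'
  constructor
  · rintro ⟨hD, hB⟩
    have hB1 : ∀ l a x, _ := fun l a x => hB l (a, 0) (0, x)
    have hB2 : ∀ l x a, _ := fun l x a => hB l (0, x) (a, 0)
    have hB3 : ∀ l x y, _ := fun l x y => hB l (0, x) (0, y)
    have hD0 : ∀ x, _ := fun x => hD (0, x)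
    simp only [hφ, unifiedBracket, Prod.mk.injEq, map_zero, add_zero, zero_add,
      hb.zero_left, hb.zero_right, h1.zero_left, h1.zero_right, h2.zero_left, h2.zero_right,
      h3.zero_left, h3.zero_right, h4.zero_left, h4.zero_right, h5.zero_left, h5.zero_right,
      h6.zero_left, h6.zero_right, k1.zero_left, k1.zero_right, k2.zero_left, k2.zero_right,
      k3.zero_left, k3.zero_right, k4.zero_left, k4.zero_right, k5.zero_left, k5.zero_right,
      k6.zero_left, k6.zero_right, LinearMap.prodMap_apply] at hB1 hB2 hB3 hD0
    refine ⟨fun q => (hD0 q).1, fun q => (hD0 q).2, ?_, ?_, ?_, ?_, ?_, ?_⟩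
    · intro l a x
      rw [LinearEquiv.eq_symm_apply]; exact (hB1 l a x).2
    · intro l a x
      rw [eq_sub_iff_add_eq]; exact (hB1 l a x).1
    · intro l x a
      rw [LinearEquiv.eq_symm_apply]; exact (hB2 l x a).2
    · intro l x a
      rw [eq_sub_iff_add_eq]; exact (hB2 l x a).1
    · intro l x y
      rw [← map_add, ← map_add, LinearEquiv.eq_symm_apply]; exact (hB3 l x y).2
    · intro l x y
      rw [eq_sub_iff_add_eq]; exact (hB3 l x y).1
  · rintro ⟨e1, e2, e3, e4, e5, e6, e7, e8⟩
    refine ⟨?_, ?_⟩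
    · rintro ⟨a, x⟩
      simp [hφ, e1, e2]
    · rintro l ⟨a, x⟩ ⟨b, y⟩
      simp only [hφ, unifiedBracket, Prod.mk.injEq]
      constructor
      · simp only [e4, e6, e8, map_add, hb.add_left, hb.add_right, k1.add_left, k4.add_right]
        abel
      · simp only [e3, e5, e7, map_add, LinearEquiv.apply_symm_apply, k2.add_left, k3.add_right]
        abel

theorem form_of_stab
    {R Q : Type*} [AddCommGroup R] [Module ℂ R] [AddCommGroup Q] [Module ℂ Q]
    (φ : R × Q →ₗ[ℂ] R × Q) (hbij : Function.Bijective φ) (hs : StabilizesFst φ) :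
    ∃ (u : Q →ₗ[ℂ] R) (v : Q ≃ₗ[ℂ] Q), ∀ p, φ p = (p.1 + u p.2, v p.2) := by
  let u : Q →ₗ[ℂ] R := LinearMap.fst ℂ R Q ∘ₗ φ ∘ₗ LinearMap.inr ℂ R Q
  let v : Q →ₗ[ℂ] Q := LinearMap.snd ℂ R Q ∘ₗ φ ∘ₗ LinearMap.inr ℂ R Q
  have h : ∀ p, φ p = (p.1 + u p.2, v p.2) := by
    rintro ⟨a, x⟩
    have : ((a, x) : R × Q) = (a, 0) + (0, x) := by simp
    rw [this, map_add, hs a]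
    ext <;> simp [u, v]
  have hv : Function.Bijective v := by
    constructor
    · rw [injective_iff_map_eq_zero]
      intro x hx
      have : φ (-u x, x) = φ 0 := by rw [h, map_zero]; simp [hx]
      exact congrArg Prod.snd (hbij.1 this)
    · intro y
      obtain ⟨p, hp⟩ := hbij.2 (0, y)
      rw [h] at hp
      exact ⟨p.2, congrArg Prod.snd hp⟩
  exact ⟨u, LinearEquiv.ofBijective v hv, h⟩

theorem exists_form
    {R Q : Type*} [AddCommGroup R] [Module ℂ R] [AddCommGroup Q] [Module ℂ Q]
    (u : Q →ₗ[ℂ] R) (v : Q ≃ₗ[ℂ] Q) :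
    ∃ φ : R × Q →ₗ[ℂ] R × Q, Function.Bijective φ ∧ StabilizesFst φ ∧
      ∀ p, φ p = (p.1 + u p.2, v p.2) := by
  let φ : R × Q →ₗ[ℂ] R × Q :=
    (LinearMap.fst ℂ R Q + u ∘ₗ LinearMap.snd ℂ R Q).prod (v.toLinearMap ∘ₗ LinearMap.snd ℂ R Q)
  have h : ∀ p, φ p = (p.1 + u p.2, v p.2) := fun p => rfl
  refine ⟨φ, ⟨?_, ?_⟩, ?_, h⟩
  · rintro ⟨a, x⟩ ⟨b, y⟩ hp
    simp only [h, Prod.mk.injEq, EmbeddingLike.apply_eq_iff_eq] at hp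
    obtain ⟨h1, rfl⟩ := hp
    simpa using h1
  · rintro ⟨b, y⟩
    exact ⟨(b - u (v.symm y), v.symm y), by simp [h]⟩
  · intro a
    simp [h]

/-- Two unified products `R ♮ Q` and `R ♮' Q` are isomorphic by an
isomorphism stabilizing `R` iff `Ω(R,Q) ≡ Ω'(R,Q)`, and by an isomorphism stabilizing `R`
and co-stabilizing `Q` iff `Ω(R,Q) ≈ Ω'(R,Q)`. -/
theorem unified_products_iso_iff_datum_equiv
    {R Q : Type*} [AddCommGroup R] [Module ℂ R] [AddCommGroup Q] [Module ℂ Q]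
    (DR : Module.End ℂ R) (DQ : Module.End ℂ Q)
    (br : ℂ → R → R → R) (hLeib : IsLeibnizConformal DR br)
    (lh : ℂ → R → Q → R) (rh : ℂ → R → Q → Q)
    (lt : ℂ → Q → R → Q) (rt : ℂ → Q → R → R)
    (fm : ℂ → Q → Q → R) (bq : ℂ → Q → Q → Q)
    (lh' : ℂ → R → Q → R) (rh' : ℂ → R → Q → Q)
    (lt' : ℂ → Q → R → Q) (rt' : ℂ → Q → R → R)
    (fm' : ℂ → Q → Q → R) (bq' : ℂ → Q → Q → Q)
    (hdatum : IsExtendingDatum DR DQ lh rh lt rt fm bq)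
    (hdatum' : IsExtendingDatum DR DQ lh' rh' lt' rt' fm' bq')
    (hU : IsLeibnizConformal (LinearMap.prodMap DR DQ)
      (unifiedBracket br lh rh lt rt fm bq))
    (hU' : IsLeibnizConformal (LinearMap.prodMap DR DQ)
      (unifiedBracket br lh' rh' lt' rt' fm' bq')) :
    ((∃ φ : R × Q →ₗ[ℂ] R × Q, Function.Bijective φ ∧
        PreservesD (LinearMap.prodMap DR DQ) φ ∧
        IsBracketHom (unifiedBracket br lh rh lt rt fm bq)
          (unifiedBracket br lh' rh' lt' rt' fm' bq') φ ∧
        StabilizesFst φ) ↔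
      (∃ (u : Q →ₗ[ℂ] R) (v : Q ≃ₗ[ℂ] Q),
        DatumEquivVia DR DQ br lh rh lt rt fm bq lh' rh' lt' rt' fm' bq' u v)) ∧
    ((∃ φ : R × Q →ₗ[ℂ] R × Q, Function.Bijective φ ∧
        PreservesD (LinearMap.prodMap DR DQ) φ ∧
        IsBracketHom (unifiedBracket br lh rh lt rt fm bq)
          (unifiedBracket br lh' rh' lt' rt' fm' bq') φ ∧
        StabilizesFst φ ∧ CoStabilizesSnd φ) ↔
      (∃ u : Q →ₗ[ℂ] R,
        DatumEquivVia DR DQ br lh rh lt rt fm bq lh' rh' lt' rt' fm' bq' u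
          (LinearEquiv.refl ℂ Q))) := by
  have core := core_iff DR DQ br hLeib.bilin lh rh lt rt fm bq lh' rh' lt' rt' fm' bq'
    hdatum hdatum'
  refine ⟨⟨?_, ?_⟩, ⟨?_, ?_⟩⟩
  · rintro ⟨φ, hbij, hD, hB, hs⟩
    obtain ⟨u, v, h⟩ := form_of_stab φ hbij hs
    exact ⟨u, v, (core u v φ h).1 ⟨hD, hB⟩⟩
  · rintro ⟨u, v, hE⟩
    obtain ⟨φ, hbij, hs, h⟩ := exists_form u v
    obtain ⟨hD, hB⟩ := (core u v φ h).2 hE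
    exact ⟨φ, hbij, hD, hB, hs⟩
  · rintro ⟨φ, hbij, hD, hB, hs, hc⟩
    obtain ⟨u, v, h⟩ := form_of_stab φ hbij hs
    have hv : v = LinearEquiv.refl ℂ Q := by
      ext x
      have := hc (0, x)
      rw [h] at this
      exact this
    subst hv
    exact ⟨u, (core u _ φ h).1 ⟨hD, hB⟩⟩
  · rintro ⟨u, hE⟩
    obtain ⟨φ, hbij, hs, h⟩ := exists_form u (LinearEquiv.refl ℂ Q)
    obtain ⟨hD, hB⟩ := (core u _ φ h).2 hE
    exact ⟨φ, hbij, hD, hB, hs, fun p => by rw [h]; rfl⟩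
end
end

section
/- Let R = ℂ[∂]V be a Leibniz conformal algebra, Q = ℂ[∂]x a free ℂ[∂]-module of rank 1, and E = R ⊕ Q as ℂ[∂]-modules. Then CExtd(E,R) ≅ (F₁(R)/≡₁) ∪ (F₂(R)/≡₂), where ≡₁ on F₁(R) is: (h, D, T, Q₀, P) ≡₁ (h', D', T', Q₀', P') iff h = h' and there exist u₀ ∈ R and β ∈ ℂ∖{0} with D_λ(a) = [a_λ u₀] + βD'_λ(a) − h_λ(a,∂)u₀, T_λ(a) = [u₀ _λ a] + βT'_λ(a), P(λ,∂) = h'_λ(u₀,∂) + βP'(λ,∂), Q₀(λ,∂) = [u₀ _λ u₀] + βD'_λ(u₀) + βT'_λ(u₀) + β²Q₀'(λ,∂) − P(λ,∂)u₀, for all a ∈ R; and ≡₂ on F₂(R) is the same except T_λ(a) = [u₀ _λ a] + βT'_λ(a) + h_{−λ−∂}(a,∂)u₀ and P(λ,∂) = h'_λ(u₀,∂) − h'_{−λ−∂}(u₀,∂) + βP'(λ,∂). Similarly CExtd'(E,R) ≅ (F₁(R)/≈₁) ∪ (F₂(R)/≈₂), where ≈ᵢ is ≡ᵢ with β = 1.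 The bijections send the class of (h, D, T, Q₀, P) ∈ F₁(R) to the class of the Leibniz conformal algebra FC₁ and the class of (h, D, T, Q₀, P) ∈ F₂(R) to the class of FC₂. -/
noncomputable section

/-- A Leibniz conformal algebra structure on `E = R ⊕ Q` containing `R`
as a subalgebra (an element of the set underlying `CExtd(E,R)`). -/
structure LCAOn (R Q : Type*)
    [AddCommGroup R] [Module ℂ R] [AddCommGroup Q] [Module ℂ Q]
    (DR : Module.End ℂ R) (DQ : Module.End ℂ Q) (br : ℂ → R → R → R) where
  brE : ℂ → R × Q → R × Q → R × Q
  leib : IsLeibnizConformal (LinearMap.prodMap DR DQ) brE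
  sub : ∀ (l : ℂ) (a b : R), brE l (a, 0) (b, 0) = (br l a b, 0)

/-- The relation `≡` on Leibniz conformal algebra structures on `E = R ⊕ Q` containing `R`
as a subalgebra: isomorphism stabilizing `R`. -/
def lcaEquiv {R Q : Type*}
    [AddCommGroup R] [Module ℂ R] [AddCommGroup Q] [Module ℂ Q]
    (DR : Module.End ℂ R) (DQ : Module.End ℂ Q) (br : ℂ → R → R → R)
    (A B : LCAOn R Q DR DQ br) : Prop :=
  ∃ φ : R × Q →ₗ[ℂ] R × Q, Function.Bijective φ ∧
    PreservesD (LinearMap.prodMap DR DQ) φ ∧ IsBracketHom A.brE B.brE φ ∧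
    StabilizesFst φ

/-- The relation `≈` on Leibniz conformal algebra structures on `E = R ⊕ Q` containing `R`
as a subalgebra: isomorphism stabilizing `R` and co-stabilizing `Q`. -/
def lcaCohom {R Q : Type*}
    [AddCommGroup R] [Module ℂ R] [AddCommGroup Q] [Module ℂ Q]
    (DR : Module.End ℂ R) (DQ : Module.End ℂ Q) (br : ℂ → R → R → R)
    (A B : LCAOn R Q DR DQ br) : Prop :=
  ∃ φ : R × Q →ₗ[ℂ] R × Q, Function.Bijective φ ∧
    PreservesD (LinearMap.prodMap DR DQ) φ ∧ IsBracketHom A.brE B.brE φ ∧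
    StabilizesFst φ ∧ CoStabilizesSnd φ

open Polynomial in
/-- The polynomial ring `ℂ[λ, ∂]`, realized as `(ℂ[∂])[λ]`: the *outer* variable is `λ`
and the *inner* variable is `∂`. -/
abbrev CPoly2 : Type := Polynomial (Polynomial ℂ)

open Polynomial in
/-- Substitute `λ := lam` and `∂ := del` (simultaneously) in `p ∈ ℂ[λ,∂]`; the result is a
polynomial in the remaining formal variable. -/
noncomputable def sub2 (p : CPoly2) (lam del : Polynomial ℂ) : Polynomial ℂ :=
  Polynomial.eval₂ (Polynomial.aeval del).toRingHom lam p

open Polynomial in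
/-- Evaluate `p ∈ ℂ[λ,∂]` at `λ := lam`, `∂ := del` with `lam del : ℂ`. -/
noncomputable def ev2 (p : CPoly2) (lam del : ℂ) : ℂ :=
  (p.eval (Polynomial.C lam)).eval del

open Polynomial in
/-- Substitute `λ := -λ - ∂` in `p ∈ ℂ[λ,∂]` (a formal substitution inside `ℂ[λ,∂]`). -/
noncomputable def twistL (p : CPoly2) : CPoly2 :=
  Polynomial.eval₂ (Polynomial.C : Polynomial ℂ →+* CPoly2)
    (-(Polynomial.X : CPoly2) - Polynomial.C Polynomial.X) p

/-- `IsNegShift D g g'` encodes, for polynomial functions `ℂ → R`, the formal identity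
`g'(λ) = g(-λ-∂)`: there are coefficients `c i` of `g` such that
`g' l = ∑ (-l - ∂)^i (c i)`, where `∂` acts via `D`. -/
def IsNegShift {R : Type*} [AddCommGroup R] [Module ℂ R] (D : Module.End ℂ R)
    (g g' : ℂ → R) : Prop :=
  ∃ (N : ℕ) (c : ℕ → R),
    (∀ l : ℂ, g l = ∑ i ∈ Finset.range N, l ^ i • c i) ∧
    (∀ l : ℂ, g' l = ∑ i ∈ Finset.range N,
      ((((-l) • (1 : Module.End ℂ R) - D)) ^ i) (c i))

open Polynomial

/-- The data of a 5-tuple `(h_λ(·,∂), D_λ, T_λ, Q₀(λ,∂), P(λ,∂))` on `R`: `h` is a left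
conformal linear map `R → ℂ[λ,∂]`, `Dm` a left conformal linear map, `Tm` a conformal
linear map, `Q₀ ∈ R[λ]` and `P ∈ ℂ[λ,∂]`. -/
structure FlagData (R : Type*) [AddCommGroup R] [Module ℂ R]
    (DR : Module.End ℂ R) where
  h : R →ₗ[ℂ] CPoly2
  Dm : ℂ → R → R
  Tm : ℂ → R → R
  Q0 : ℂ → R
  P : CPoly2
  h_conf : ∀ a : R, h (DR a) = -(Polynomial.X : CPoly2) * h a
  Dm_lin : ∀ l : ℂ, IsLinearMap ℂ (Dm l)
  Dm_poly : ∀ a : R, IsPolyFun (fun l => Dm l a)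
  Dm_conf : ∀ (l : ℂ) (a : R), Dm l (DR a) = (-l) • Dm l a
  Tm_lin : ∀ l : ℂ, IsLinearMap ℂ (Tm l)
  Tm_poly : ∀ a : R, IsPolyFun (fun l => Tm l a)
  Tm_conf : ∀ (l : ℂ) (a : R), Tm l (DR a) = DR (Tm l a) + l • Tm l a
  Q0_poly : IsPolyFun Q0

/-- `F` is a flag datum of the first kind of `R`: conditions (2.14)–(2.24)
(`(F1)`–`(F11)`) of the paper. -/
def IsFlag1 {R : Type*} [AddCommGroup R] [Module ℂ R] (DR : Module.End ℂ R)
    (br : ℂ → R → R → R) (F : FlagData R DR) : Prop :=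
  -- (F1)
  (∀ (l m : ℂ) (a b : R),
    sub2 (F.h (br l a b)) (C (l + m)) X
      = sub2 (F.h b) (C m) (C l + X) * sub2 (F.h a) (C l) X
        - sub2 (F.h a) (C l) (C m + X) * sub2 (F.h b) (C m) X) ∧
  -- (F2)
  (∀ (l m : ℂ) (a b : R),
    F.Dm (l + m) (br l a b)
      = br l a (F.Dm m b) + aeval DR (sub2 (F.h b) (C m) (C l + X)) (F.Dm l a)
        - br m b (F.Dm l a) - aeval DR (sub2 (F.h a) (C l) (C m + X)) (F.Dm m b)) ∧
  -- (F3)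
  (∀ (l m : ℂ) (a b : R),
    F.Tm m (br l a b)
      = br l a (F.Tm m b) - br (l + m) (F.Dm l a) b
        - ev2 (F.h a) l (-l - m) • F.Tm (l + m) b) ∧
  -- (F4)
  (∀ (l m : ℂ) (a b : R),
    F.Tm m (br l a b) = br l a (F.Tm m b) + br (l + m) (F.Tm m a) b) ∧
  -- (F5)
  (∀ (l m : ℂ) (a : R),
    sub2 F.P (C m) (C l + X) * sub2 (F.h a) (C l) X
      = ev2 (F.h a) l (-l - m) • sub2 F.P (C (l + m)) X
        + sub2 (F.h a) (C l) (C m + X) * sub2 F.P (C m) X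
        + sub2 (F.h (F.Dm l a)) (C (l + m)) X) ∧
  -- (F6)
  (∀ (l m : ℂ) (a : R),
    aeval DR (sub2 F.P (C m) (C l + X)) (F.Dm l a)
      = F.Dm (l + m) (F.Dm l a) + ev2 (F.h a) l (-l - m) • F.Q0 (l + m)
        + F.Tm m (F.Dm l a) + aeval DR (sub2 (F.h a) (C l) (C m + X)) (F.Q0 m)
        - br l a (F.Q0 m)) ∧
  -- (F7)
  (∀ (l m : ℂ) (a : R),
    F.Dm (l + m) (F.Tm m a) + F.Dm (l + m) (F.Dm l a)
      + ev2 (F.h a) l (-l - m) • F.Q0 (l + m) = 0) ∧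
  -- (F8)
  (∀ (l m : ℂ) (a : R),
    ev2 (F.h a) l (-l - m) • sub2 F.P (C (l + m)) X
      + sub2 (F.h (F.Dm l a)) (C (l + m)) X
      + sub2 (F.h (F.Tm m a)) (C (l + m)) X = 0) ∧
  -- (F9)
  (∀ (l m : ℂ) (a : R),
    ev2 F.P l (-l - m) • F.Tm (l + m) a
      = F.Tm l (F.Tm m a) - br (l + m) (F.Q0 l) a - F.Tm m (F.Tm l a)) ∧
  -- (F10)
  (∀ l m : ℂ,
    F.Tm l (F.Q0 m)
      = F.Dm (l + m) (F.Q0 l) + ev2 F.P l (-l - m) • F.Q0 (l + m) + F.Tm m (F.Q0 l)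
        + aeval DR (sub2 F.P (C l) (C m + X)) (F.Q0 m)
        - aeval DR (sub2 F.P (C m) (C l + X)) (F.Q0 l)) ∧
  -- (F11)
  (∀ l m : ℂ,
    sub2 (F.h (F.Q0 l)) (C (l + m)) X
      + ev2 F.P l (-l - m) • sub2 F.P (C (l + m)) X
      + sub2 F.P (C l) (C m + X) * sub2 F.P (C m) X
      - sub2 F.P (C m) (C l + X) * sub2 F.P (C l) X = 0)

/-- `F` is a flag datum of the second kind of `R`: `h` non-trivial, conditions (F1),
(F2), (F6), (F10) together with (2.25)–(2.33) (`(G1)`–`(G8)`) of the paper. -/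
def IsFlag2 {R : Type*} [AddCommGroup R] [Module ℂ R] (DR : Module.End ℂ R)
    (br : ℂ → R → R → R) (F : FlagData R DR) : Prop :=
  -- `h` is a non-trivial map
  F.h ≠ 0 ∧
  -- (F1)
  (∀ (l m : ℂ) (a b : R),
    sub2 (F.h (br l a b)) (C (l + m)) X
      = sub2 (F.h b) (C m) (C l + X) * sub2 (F.h a) (C l) X
        - sub2 (F.h a) (C l) (C m + X) * sub2 (F.h b) (C m) X) ∧
  -- (F2)
  (∀ (l m : ℂ) (a b : R),
    F.Dm (l + m) (br l a b)
      = br l a (F.Dm m b) + aeval DR (sub2 (F.h b) (C m) (C l + X)) (F.Dm l a)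
        - br m b (F.Dm l a) - aeval DR (sub2 (F.h a) (C l) (C m + X)) (F.Dm m b)) ∧
  -- (F6)
  (∀ (l m : ℂ) (a : R),
    aeval DR (sub2 F.P (C m) (C l + X)) (F.Dm l a)
      = F.Dm (l + m) (F.Dm l a) + ev2 (F.h a) l (-l - m) • F.Q0 (l + m)
        + F.Tm m (F.Dm l a) + aeval DR (sub2 (F.h a) (C l) (C m + X)) (F.Q0 m)
        - br l a (F.Q0 m)) ∧
  -- (F10)
  (∀ l m : ℂ,
    F.Tm l (F.Q0 m)
      = F.Dm (l + m) (F.Q0 l) + ev2 F.P l (-l - m) • F.Q0 (l + m) + F.Tm m (F.Q0 l)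
        + aeval DR (sub2 F.P (C l) (C m + X)) (F.Q0 m)
        - aeval DR (sub2 F.P (C m) (C l + X)) (F.Q0 l)) ∧
  -- (G1)
  (∀ (l m : ℂ) (a b : R),
    F.Tm m (br l a b)
      = br l a (F.Tm m b)
        - aeval DR (sub2 (F.h b) (-(C l) - C m - X) (C l + X)) (F.Dm l a)
        - br (l + m) (F.Dm l a) b - ev2 (F.h a) l (-l - m) • F.Tm (l + m) b) ∧
  -- (G2)
  (∀ (l m : ℂ) (a b : R),
    br (l + m) (F.Tm m a) b + br (l + m) (F.Dm l a) b = 0) ∧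
  -- (G3)
  (∀ (l m : ℂ) (a : R),
    sub2 F.P (C m) (C l + X) * sub2 (F.h a) (C l) X
      = ev2 (F.h a) l (-l - m) • sub2 F.P (C (l + m)) X
        - sub2 (F.h (F.Dm l a)) (-(C m) - X) X
        + sub2 (F.h a) (C l) (C m + X) * sub2 F.P (C m) X
        + sub2 (F.h (F.Dm l a)) (C (l + m)) X) ∧
  -- (G4)
  (∀ (l m : ℂ) (a : R),
    F.Dm (l + m) (F.Tm m a) + F.Dm (l + m) (F.Dm l a) = 0) ∧
  -- (G5)
  (∀ (l m : ℂ) (a : R),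
    sub2 (F.h (F.Dm l a)) (C (l + m)) X + sub2 (F.h (F.Tm m a)) (C (l + m)) X = 0) ∧
  -- (G6)
  (∀ (l m : ℂ) (a : R),
    ev2 F.P l (-l - m) • F.Tm (l + m) a
      = F.Tm l (F.Tm m a)
        - aeval DR (sub2 (F.h a) (-(C l) - C m - X) (C l + X)) (F.Q0 l)
        - br (l + m) (F.Q0 l) a - F.Tm m (F.Tm l a)
        + aeval DR (sub2 (F.h a) (-(C l) - C m - X) (C m + X)) (F.Q0 m)) ∧
  -- (G7)
  (∀ (l m : ℂ) (a : R),
    ev2 F.P l (-l - m) • sub2 (F.h a) (-(C l) - C m - X) X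
      = sub2 (F.h (F.Tm m a)) (-(C l) - X) X
        + sub2 (F.h a) (-(C l) - C m - X) (C l + X) * sub2 F.P (C l) X
        - sub2 (F.h (F.Tm l a)) (-(C m) - X) X
        - sub2 (F.h a) (-(C l) - C m - X) (C m + X) * sub2 F.P (C m) X) ∧
  -- (G8)
  (∀ l m : ℂ,
    -sub2 (F.h (F.Q0 m)) (-(C l) - X) X
      = sub2 (F.h (F.Q0 l)) (C (l + m)) X - sub2 (F.h (F.Q0 l)) (-(C m) - X) X
        + ev2 F.P l (-l - m) • sub2 F.P (C (l + m)) X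
        + sub2 F.P (C l) (C m + X) * sub2 F.P (C m) X
        - sub2 F.P (C m) (C l + X) * sub2 F.P (C l) X)

/-- The flag datum `(h,D,T,Q₀,P)` is obtained from `(h',D',T',Q₀',P')` via `(u₀, β)`,
first-kind version (the relation `≡₁`, resp. `≈₁` when `β = 1`). -/
def FlagRel1Via {R : Type*} [AddCommGroup R] [Module ℂ R] (DR : Module.End ℂ R)
    (br : ℂ → R → R → R) (F F' : FlagData R DR) (u₀ : R) (β : ℂ) : Prop :=
  F.h = F'.h ∧
  (∀ (l : ℂ) (a : R),
    F.Dm l a = br l a u₀ + β • F'.Dm l a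
      - Polynomial.aeval DR (sub2 (F.h a) (C l) X) u₀) ∧
  (∀ (l : ℂ) (a : R), F.Tm l a = br l u₀ a + β • F'.Tm l a) ∧
  (F.P = F'.h u₀ + β • F'.P) ∧
  (∀ l : ℂ, F.Q0 l
    = br l u₀ u₀ + β • F'.Dm l u₀ + β • F'.Tm l u₀ + β ^ 2 • F'.Q0 l
      - Polynomial.aeval DR (sub2 F.P (C l) X) u₀)

/-- The flag datum `(h,D,T,Q₀,P)` is obtained from `(h',D',T',Q₀',P')` via `(u₀, β)`,
second-kind version (the relation `≡₂`, resp. `≈₂` when `β = 1`). -/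
def FlagRel2Via {R : Type*} [AddCommGroup R] [Module ℂ R] (DR : Module.End ℂ R)
    (br : ℂ → R → R → R) (F F' : FlagData R DR) (u₀ : R) (β : ℂ) : Prop :=
  F.h = F'.h ∧
  (∀ (l : ℂ) (a : R),
    F.Dm l a = br l a u₀ + β • F'.Dm l a
      - Polynomial.aeval DR (sub2 (F.h a) (C l) X) u₀) ∧
  (∀ (l : ℂ) (a : R),
    F.Tm l a = br l u₀ a + β • F'.Tm l a
      + Polynomial.aeval DR (sub2 (F.h a) (-(C l) - X) X) u₀) ∧
  (F.P = F'.h u₀ - twistL (F'.h u₀) + β • F'.P) ∧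
  (∀ l : ℂ, F.Q0 l
    = br l u₀ u₀ + β • F'.Dm l u₀ + β • F'.Tm l u₀ + β ^ 2 • F'.Q0 l
      - Polynomial.aeval DR (sub2 F.P (C l) X) u₀)

/-- `A` is the Leibniz conformal algebra
`FC₁(R, ℂ[∂]x | h, D, T, Q₀, P)` associated with a flag datum of the first kind. -/
def IsFC1Of {R Q : Type*} [AddCommGroup R] [Module ℂ R] [AddCommGroup Q] [Module ℂ Q]
    (DR : Module.End ℂ R) (DQ : Module.End ℂ Q) (br : ℂ → R → R → R) (x : Q)
    (F : FlagData R DR) (A : LCAOn R Q DR DQ br) : Prop :=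
  (∀ (l : ℂ) (a : R),
    A.brE l (a, 0) (0, x) = (F.Dm l a, Polynomial.aeval DQ (sub2 (F.h a) (C l) X) x)) ∧
  (∀ (l : ℂ) (a : R), A.brE l (0, x) (a, 0) = (F.Tm l a, 0)) ∧
  (∀ l : ℂ,
    A.brE l (0, x) (0, x) = (F.Q0 l, Polynomial.aeval DQ (sub2 F.P (C l) X) x))

/-- `A` is the Leibniz conformal algebra
`FC₂(R, ℂ[∂]x | h, D, T, Q₀, P)` associated with a flag datum of the second kind. -/
def IsFC2Of {R Q : Type*} [AddCommGroup R] [Module ℂ R] [AddCommGroup Q] [Module ℂ Q]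
    (DR : Module.End ℂ R) (DQ : Module.End ℂ Q) (br : ℂ → R → R → R) (x : Q)
    (F : FlagData R DR) (A : LCAOn R Q DR DQ br) : Prop :=
  (∀ (l : ℂ) (a : R),
    A.brE l (a, 0) (0, x) = (F.Dm l a, Polynomial.aeval DQ (sub2 (F.h a) (C l) X) x)) ∧
  (∀ (l : ℂ) (a : R),
    A.brE l (0, x) (a, 0)
      = (F.Tm l a, -(Polynomial.aeval DQ (sub2 (F.h a) (-(C l) - X) X) x))) ∧
  (∀ l : ℂ,
    A.brE l (0, x) (0, x) = (F.Q0 l, Polynomial.aeval DQ (sub2 F.P (C l) X) x))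

section helpers
open Polynomial

section helpers

theorem sub2_add (p q : CPoly2) (a b : ℂ[X]) : sub2 (p + q) a b = sub2 p a b + sub2 q a b := by
  simp [sub2, eval₂_add]
theorem sub2_sub (p q : CPoly2) (a b : ℂ[X]) : sub2 (p - q) a b = sub2 p a b - sub2 q a b := by
  simp [sub2, eval₂_sub]
theorem sub2_neg (p : CPoly2) (a b : ℂ[X]) : sub2 (-p) a b = -sub2 p a b := by
  simp [sub2, eval₂_neg]
theorem sub2_zero (a b : ℂ[X]) : sub2 0 a b = 0 := by
  simp [sub2]
theorem sub2_mul (p q : CPoly2) (a b : ℂ[X]) : sub2 (p * q) a b = sub2 p a b * sub2 q a b := by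
  simp [sub2, eval₂_mul]
theorem smul_CPoly2 (c : ℂ) (p : CPoly2) : c • p = C (C c) * p := by
  ext i j; simp
theorem sub2_CC (c : ℂ) (a b : ℂ[X]) : sub2 (C (C c)) a b = C c := by
  simp [sub2, eval₂_C]
theorem sub2_CX (a b : ℂ[X]) : sub2 (C X) a b = b := by
  simp [sub2, eval₂_C]
theorem sub2_X (a b : ℂ[X]) : sub2 X a b = a := by
  simp [sub2]
theorem sub2_smul (c : ℂ) (p : CPoly2) (a b : ℂ[X]) : sub2 (c • p) a b = c • sub2 p a b := by
  rw [smul_CPoly2, sub2_mul, sub2_CC, smul_eq_C_mul]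
theorem sub2_hom (p : CPoly2) (a b : ℂ[X]) (f : ℂ[X] →ₐ[ℂ] ℂ[X]) :
    f (sub2 p a b) = sub2 p (f a) (f b) := by
  unfold sub2
  have := Polynomial.hom_eval₂ p (aeval b).toRingHom f.toRingHom a
  have h2 : f.toRingHom.comp (aeval b).toRingHom = (aeval (R := ℂ) (f b)).toRingHom := by
    have : f.comp (aeval b) = aeval (f b) := by ext; simp
    rw [← this]; rfl
  rw [h2] at this
  exact this
theorem sub2_comp (p : CPoly2) (a b r : ℂ[X]) :
    (sub2 p a b).comp r = sub2 p (a.comp r) (b.comp r) := by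
  have := sub2_hom p a b (aeval r)
  simpa [Polynomial.comp, Polynomial.aeval_def] using this
theorem sub2_eval_C (p : CPoly2) (l : ℂ) : sub2 p (C l) X = p.eval (C l) := by
  unfold sub2
  have : (aeval (R := ℂ) (X : ℂ[X])).toRingHom = RingHom.id _ := by
    rw [aeval_X_left]; rfl
  rw [this]; rfl
theorem ev2_eq (p : CPoly2) (l d : ℂ) : ev2 p l d = eval₂ (evalRingHom d) l p := by
  unfold ev2
  have := Polynomial.hom_eval₂ p (RingHom.id _) (evalRingHom d) (C l)
  rw [RingHom.comp_id] at this
  rw [show eval (C l) p = eval₂ (RingHom.id ℂ[X]) (C l) p from rfl]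
  simp only [coe_evalRingHom, eval_C] at this
  exact this
theorem sub2_eval (p : CPoly2) (a b : ℂ[X]) (d : ℂ) :
    (sub2 p a b).eval d = ev2 p (a.eval d) (b.eval d) := by
  rw [ev2_eq]
  unfold sub2
  have := Polynomial.hom_eval₂ p (aeval b).toRingHom (evalRingHom d) a
  have h2 : (evalRingHom d).comp (aeval b).toRingHom = evalRingHom (b.eval d) := by
    ext <;> simp
  rw [h2] at this
  exact this
theorem sub2_shift (p : CPoly2) (m l : ℂ) :
    (sub2 p (C m) X).comp (X + C l) = sub2 p (C m) (C l + X) := by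
  rw [sub2_comp]; simp [add_comm]
theorem ev2_eval (p : CPoly2) (l d : ℂ) : (sub2 p (C l) X).eval d = ev2 p l d := by
  simp [sub2_eval]
theorem CPoly2_ext {p q : CPoly2} (H : ∀ l : ℂ, sub2 p (C l) X = sub2 q (C l) X) : p = q := by
  apply Polynomial.eq_of_infinite_eval_eq
  refine Set.Infinite.mono (s := Set.range (C : ℂ → ℂ[X])) ?_ 
    (Set.infinite_range_of_injective Polynomial.C_injective)
  rintro _ ⟨l, rfl⟩
  simpa [sub2_eval_C] using H l
theorem poly_ext {p q : ℂ[X]} (H : ∀ d : ℂ, p.eval d = q.eval d) : p = q :=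
  Polynomial.funext H

theorem sub2_twist (p : CPoly2) (a b : ℂ[X]) : sub2 (twistL p) a b = sub2 p (-a - b) b := by
  unfold sub2 twistL
  have h := Polynomial.hom_eval₂ p (C : ℂ[X] →+* CPoly2)
    (eval₂RingHom (aeval b).toRingHom a) (-(X : CPoly2) - C X)
  have h2 : (eval₂RingHom (aeval b).toRingHom a).comp (C : ℂ[X] →+* CPoly2)
      = (aeval (R := ℂ) b).toRingHom := by
    ext <;> simp
  rw [h2] at h
  simp only [coe_eval₂RingHom, eval₂_sub, eval₂_neg, eval₂_X, eval₂_C] at h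
  simpa using h

/-- negative twist as a linear map -/
def ntwist : CPoly2 →ₗ[ℂ] CPoly2 where
  toFun p := - twistL p
  map_add' p q := by
    apply CPoly2_ext; intro l; simp only [sub2_neg, sub2_add, sub2_twist]; ring
  map_smul' c p := by
    apply CPoly2_ext; intro l
    simp only [sub2_neg, sub2_smul, sub2_twist, RingHom.id_apply, smul_neg]

theorem sub2_ntwist (p : CPoly2) (a b : ℂ[X]) : sub2 (ntwist p) a b = - sub2 p (-a - b) b := by
  show sub2 (- twistL p) a b = _
  rw [sub2_neg, sub2_twist]

theorem isPolyFun_iff {R : Type*} [AddCommGroup R] [Module ℂ R] (g : ℂ → R) :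
    IsPolyFun g ↔ ∃ c : ℕ →₀ R, ∀ l, g l = c.sum fun i r => l ^ i • r := by
  constructor
  · rintro ⟨N, c, h⟩
    refine ⟨∑ i ∈ Finset.range N, Finsupp.single i (c i), fun l => ?_⟩
    rw [h l, ← Finsupp.sum_finsetSum_index (by simp) (by simp)]
    simp
  · rintro ⟨c, h⟩
    refine ⟨c.support.sup id + 1, c, fun l => ?_⟩
    rw [h l]
    apply Finset.sum_subset
    · intro i hi
      have := Finset.le_sup (f := id) hi
      simp only [id] at this
      exact Finset.mem_range.2 (Nat.lt_succ_of_le this)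
    · intro i _ hi
      simp [Finsupp.notMem_support_iff.1 hi]

section polyfun
variable {R S : Type*} [AddCommGroup R] [Module ℂ R] [AddCommGroup S] [Module ℂ S]

theorem IsPolyFun.add {g g' : ℂ → R} (h : IsPolyFun g) (h' : IsPolyFun g') :
    IsPolyFun (fun l => g l + g' l) := by
  rw [isPolyFun_iff] at *
  obtain ⟨c, h⟩ := h
  obtain ⟨c', h'⟩ := h'
  refine ⟨c + c', fun l => ?_⟩
  rw [h, h', Finsupp.sum_add_index' (by simp) (by simp)]

theorem IsPolyFun.const (r : R) : IsPolyFun (fun _ => r) :=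
  ⟨1, fun _ => r, fun l => by simp⟩

theorem IsPolyFun.map {g : ℂ → R} (f : R →ₗ[ℂ] S) (h : IsPolyFun g) :
    IsPolyFun (fun l => f (g l)) := by
  obtain ⟨N, c, h⟩ := h
  exact ⟨N, fun i => f (c i), fun l => by simp [h]⟩

theorem IsPolyFun.smulvar {g : ℂ → R} (h : IsPolyFun g) :
    IsPolyFun (fun l => l • g l) := by
  obtain ⟨N, c, h⟩ := h
  refine ⟨N + 1, fun i => if i = 0 then 0 else c (i - 1), fun l => ?_⟩
  beta_reduce
  rw [h, Finset.sum_range_succ', Finset.smul_sum]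
  simp [pow_succ', mul_smul]

theorem IsPolyFun.pair {g : ℂ → R} {k : ℂ → S} (h : IsPolyFun g) (h' : IsPolyFun k) :
    IsPolyFun (fun l => (g l, k l)) := by
  have := (h.map (LinearMap.inl ℂ R S)).add (h'.map (LinearMap.inr ℂ R S))
  simpa using this

theorem IsPolyFun.evalneg {g : ℂ → R} (h : IsPolyFun g) (p : ℂ[X]) :
    IsPolyFun (fun l => p.eval (-l) • g l) := by
  induction p using Polynomial.induction_on' with
  | add p q hp hq => simpa [add_smul] using hp.add hq
  | monomial n c =>
    induction n with
    | zero => simpa using h.map (LinearMap.lsmul ℂ R c)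
    | succ n ih =>
      have := (ih.smulvar).map (-LinearMap.id)
      convert this using 2
      simp [pow_succ]
      rw [smul_smul]; congr 1; ring

theorem IsPolyFun.shift (D : Module.End ℂ R) {g : ℂ → R} (h : IsPolyFun g) (p : ℂ[X]) :
    IsPolyFun (fun l => aeval D (p.comp (X + C l)) (g l)) := by
  induction p using Polynomial.induction_on' with
  | add p q hp hq => simpa using hp.add hq
  | monomial n c =>
    induction n with
    | zero => simpa using h.map (LinearMap.lsmul ℂ R c)
    | succ n ih =>
      have := (ih.map D).add (ih.smulvar)
      convert this using 2 with l
      rw [← Polynomial.monomial_mul_X]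
      simp only [mul_comp, X_comp]
      rw [mul_comm]
      simp
      exact smul_comm _ _ _

theorem IsPolyFun.sub2 (p : CPoly2) : IsPolyFun (fun l => sub2 p (C l) X) := by
  simp only [sub2_eval_C]
  refine ⟨p.natDegree + 1, p.coeff, fun l => ?_⟩
  beta_reduce
  rw [Polynomial.eval_eq_sum_range]
  refine Finset.sum_congr rfl fun i _ => ?_
  rw [← C_pow, smul_eq_C_mul, mul_comm]

end polyfun
end helpers

section gen
variable {R Q : Type*} [AddCommGroup R] [Module ℂ R] [AddCommGroup Q] [Module ℂ Q]
    {DR : Module.End ℂ R} {DQ : Module.End ℂ Q} {br : ℂ → R → R → R} {x : Q}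

/-- shift of an endomorphism polynomial -/
theorem bilin_aeval_right {U V W : Type*}
    [AddCommGroup U] [Module ℂ U] [AddCommGroup V] [Module ℂ V]
    [AddCommGroup W] [Module ℂ W]
    {DU : Module.End ℂ U} {DV : Module.End ℂ V} {DW : Module.End ℂ W}
    {f : ℂ → U → V → W} (H : IsConformalBilin DU DV DW f) (l : ℂ) (u : U) (v : V) (p : ℂ[X]) :
    f l u (aeval DV p v) = aeval DW (p.comp (X + C l)) (f l u v) := by
  induction p using Polynomial.induction_on' with
  | add p q hp hq => simp [H.add_right, hp, hq]
  | monomial n c =>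
    induction n with
    | zero => simp [H.smul_right]
    | succ n ih =>
      rw [← Polynomial.monomial_mul_X]
      simp only [mul_comp, X_comp]
      rw [mul_comm, mul_comm _ (X + C l)]
      simp only [map_mul, Module.End.mul_apply, aeval_X, H.conf_right, ih]
      simp
      exact smul_comm _ _ _

theorem bilin_aeval_left {U V W : Type*}
    [AddCommGroup U] [Module ℂ U] [AddCommGroup V] [Module ℂ V]
    [AddCommGroup W] [Module ℂ W]
    {DU : Module.End ℂ U} {DV : Module.End ℂ V} {DW : Module.End ℂ W}
    {f : ℂ → U → V → W} (H : IsConformalBilin DU DV DW f) (l : ℂ) (u : U) (v : V) (p : ℂ[X]) :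
    f l (aeval DU p u) v = p.eval (-l) • f l u v := by
  induction p using Polynomial.induction_on' with
  | add p q hp hq => simp [H.add_left, hp, hq, add_smul]
  | monomial n c =>
    induction n with
    | zero => simp [H.smul_left]
    | succ n ih =>
      rw [← Polynomial.monomial_mul_X]
      rw [mul_comm]
      simp only [map_mul, Module.End.mul_apply, aeval_X, H.conf_left, ih, smul_smul]
      congr 1
      simp
      ring

theorem aeval_prodMap (p : ℂ[X]) (u : R × Q) :
    aeval (LinearMap.prodMap DR DQ) p u = (aeval DR p u.1, aeval DQ p u.2) := by
  induction p using Polynomial.induction_on' generalizing u with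
  | add p q hp hq => simp [hp, hq]
  | monomial n c =>
    induction n generalizing u with
    | zero => ext <;> simp
    | succ n ih =>
      rw [← Polynomial.monomial_mul_X]
      simp only [map_mul, Module.End.mul_apply, aeval_X, ih]
      simp

/-- generator values of a bracket -/
structure HasGen (DR : Module.End ℂ R) (DQ : Module.End ℂ Q) (br : ℂ → R → R → R) (x : Q)
    (B : ℂ → R × Q → R × Q → R × Q) (F : FlagData R DR) (g : R →ₗ[ℂ] CPoly2) : Prop where
  rr : ∀ (l : ℂ) (a b : R), B l (a, 0) (b, 0) = (br l a b, 0)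
  rx : ∀ (l : ℂ) (a : R),
    B l (a, 0) (0, x) = (F.Dm l a, aeval DQ (sub2 (F.h a) (C l) X) x)
  xr : ∀ (l : ℂ) (a : R),
    B l (0, x) (a, 0) = (F.Tm l a, aeval DQ (sub2 (g a) (C l) X) x)
  xx : ∀ l : ℂ, B l (0, x) (0, x) = (F.Q0 l, aeval DQ (sub2 F.P (C l) X) x)

/-- generator form of the Jacobi identity -/
structure Gen (DR : Module.End ℂ R) (br : ℂ → R → R → R)
    (F : FlagData R DR) (g : R →ₗ[ℂ] CPoly2) : Prop where
  abxQ : ∀ (l m : ℂ) (a b : R),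
    sub2 (F.h (br l a b)) (C (l + m)) X
      = sub2 (F.h b) (C m) (C l + X) * sub2 (F.h a) (C l) X
        - sub2 (F.h a) (C l) (C m + X) * sub2 (F.h b) (C m) X
  abxR : ∀ (l m : ℂ) (a b : R),
    F.Dm (l + m) (br l a b)
      = br l a (F.Dm m b) + aeval DR (sub2 (F.h b) (C m) (C l + X)) (F.Dm l a)
        - br m b (F.Dm l a) - aeval DR (sub2 (F.h a) (C l) (C m + X)) (F.Dm m b)
  axbR : ∀ (l m : ℂ) (a b : R),
    F.Tm m (br l a b)
      = br l a (F.Tm m b)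
        + aeval DR (sub2 (g b) (C m) (C l + X)) (F.Dm l a)
        - br (l + m) (F.Dm l a) b - ev2 (F.h a) l (-l - m) • F.Tm (l + m) b
  axbQ : ∀ (l m : ℂ) (a b : R),
    sub2 (g (br l a b)) (C m) X
      = sub2 (g b) (C m) (C l + X) * sub2 (F.h a) (C l) X
        - ev2 (F.h a) l (-l - m) • sub2 (g b) (C (l + m)) X
  xabR : ∀ (l m : ℂ) (a b : R),
    br (l + m) (F.Tm m a) b + br (l + m) (F.Dm l a) b
      + (ev2 (F.h a) l (-l - m) + ev2 (g a) m (-l - m)) • F.Tm (l + m) b = 0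
  xabQ : ∀ (l m : ℂ) (a b : R),
    (ev2 (F.h a) l (-l - m) + ev2 (g a) m (-l - m)) • sub2 (g b) (C (l + m)) X = 0
  axxR : ∀ (l m : ℂ) (a : R),
    aeval DR (sub2 F.P (C m) (C l + X)) (F.Dm l a)
      = F.Dm (l + m) (F.Dm l a) + ev2 (F.h a) l (-l - m) • F.Q0 (l + m)
        + F.Tm m (F.Dm l a) + aeval DR (sub2 (F.h a) (C l) (C m + X)) (F.Q0 m)
        - br l a (F.Q0 m)
  axxQ : ∀ (l m : ℂ) (a : R),
    sub2 F.P (C m) (C l + X) * sub2 (F.h a) (C l) X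
      = ev2 (F.h a) l (-l - m) • sub2 F.P (C (l + m)) X
        + sub2 (g (F.Dm l a)) (C m) X
        + sub2 (F.h a) (C l) (C m + X) * sub2 F.P (C m) X
        + sub2 (F.h (F.Dm l a)) (C (l + m)) X
  xaxR : ∀ (l m : ℂ) (a : R),
    F.Dm (l + m) (F.Tm m a) + F.Dm (l + m) (F.Dm l a)
      + (ev2 (F.h a) l (-l - m) + ev2 (g a) m (-l - m)) • F.Q0 (l + m) = 0
  xaxQ : ∀ (l m : ℂ) (a : R),
    (ev2 (F.h a) l (-l - m) + ev2 (g a) m (-l - m)) • sub2 F.P (C (l + m)) X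
      + sub2 (F.h (F.Dm l a)) (C (l + m)) X
      + sub2 (F.h (F.Tm m a)) (C (l + m)) X = 0
  xxaR : ∀ (l m : ℂ) (a : R),
    ev2 F.P l (-l - m) • F.Tm (l + m) a
      = F.Tm l (F.Tm m a)
        + aeval DR (sub2 (g a) (C m) (C l + X)) (F.Q0 l)
        - br (l + m) (F.Q0 l) a - F.Tm m (F.Tm l a)
        - aeval DR (sub2 (g a) (C l) (C m + X)) (F.Q0 m)
  xxaQ : ∀ (l m : ℂ) (a : R),
    ev2 F.P l (-l - m) • sub2 (g a) (C (l + m)) X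
      = sub2 (g (F.Tm m a)) (C l) X
        + sub2 (g a) (C m) (C l + X) * sub2 F.P (C l) X
        - sub2 (g (F.Tm l a)) (C m) X
        - sub2 (g a) (C l) (C m + X) * sub2 F.P (C m) X
  xxxR : ∀ l m : ℂ,
    F.Tm l (F.Q0 m)
      = F.Dm (l + m) (F.Q0 l) + ev2 F.P l (-l - m) • F.Q0 (l + m) + F.Tm m (F.Q0 l)
        + aeval DR (sub2 F.P (C l) (C m + X)) (F.Q0 m)
        - aeval DR (sub2 F.P (C m) (C l + X)) (F.Q0 l)
  xxxQ : ∀ l m : ℂ,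
    sub2 (g (F.Q0 m)) (C l) X
      = sub2 (F.h (F.Q0 l)) (C (l + m)) X + sub2 (g (F.Q0 l)) (C m) X
        + ev2 F.P l (-l - m) • sub2 F.P (C (l + m)) X
        + sub2 F.P (C l) (C m + X) * sub2 F.P (C m) X
        - sub2 F.P (C m) (C l + X) * sub2 F.P (C l) X

/-- the Jacobi identity at a triple -/
def Jac {E : Type*} [AddCommGroup E] (B : ℂ → E → E → E) (l m : ℂ) (u v w : E) : Prop :=
  B l u (B m v w) = B (l + m) (B l u v) w + B m v (B l u w)

theorem split_pt (DR : Module.End ℂ R) (DQ : Module.End ℂ Q) (x : Q) (a : R) (p : ℂ[X]) :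
    ((a, aeval DQ p x) : R × Q) = (a, 0) + aeval (LinearMap.prodMap DR DQ) p (0, x) := by
  rw [aeval_prodMap]; simp

theorem pair_iff (hinj : ∀ p q : ℂ[X], aeval DQ p x = aeval DQ q x → p = q) (a b c : R) (p q r : ℂ[X]) :
    ((a, aeval DQ p x) : R × Q) = (b, aeval DQ q x) + (c, aeval DQ r x) ↔
      a = b + c ∧ p = q + r := by
  simp only [Prod.mk_add_mk, Prod.mk.injEq]
  refine and_congr Iff.rfl ⟨fun h => hinj _ _ (by simpa using h), ?_⟩
  rintro rfl; simp

theorem ext_gen (hsurj : ∀ q : Q, ∃ p : ℂ[X], aeval DQ p x = q)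
    (K : R × Q → Prop) (h0 : ∀ a, K (a, 0)) (hx : K (0, x))
    (hadd : ∀ u v, K u → K v → K (u + v)) (hs : ∀ (c : ℂ) u, K u → K (c • u))
    (hD : ∀ u, K u → K (LinearMap.prodMap DR DQ u)) (u : R × Q) : K u := by
  obtain ⟨a, q⟩ := u
  obtain ⟨p, rfl⟩ := hsurj q
  rw [split_pt DR]
  refine hadd _ _ (h0 a) ?_
  induction p using Polynomial.induction_on' with
  | add p q hp hq => simpa using hadd _ _ hp hq
  | monomial n c =>
    induction n with
    | zero => simpa using hs c _ hx
    | succ n ih =>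
      rw [← Polynomial.monomial_mul_X, mul_comm, map_mul, Module.End.mul_apply, aeval_X]
      exact hD _ ih

section calcs
variable {B : ℂ → R × Q → R × Q → R × Q} {F : FlagData R DR} {g : R →ₗ[ℂ] CPoly2}
  (HB : IsConformalBilin (LinearMap.prodMap DR DQ) (LinearMap.prodMap DR DQ)
    (LinearMap.prodMap DR DQ) B) (HG : HasGen DR DQ br x B F g)
include HB HG

theorem c_r (l : ℂ) (a b : R) (p : ℂ[X]) : B l (a, 0) (b, aeval DQ p x)
    = (br l a b + aeval DR (p.comp (X + C l)) (F.Dm l a),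
      aeval DQ (p.comp (X + C l) * sub2 (F.h a) (C l) X) x) := by
  rw [split_pt DR, HB.add_right, bilin_aeval_right HB, HG.rr, HG.rx, aeval_prodMap]
  simp

theorem c_x (l : ℂ) (b : R) (p : ℂ[X]) : B l (0, x) (b, aeval DQ p x)
    = (F.Tm l b + aeval DR (p.comp (X + C l)) (F.Q0 l),
      aeval DQ (sub2 (g b) (C l) X + p.comp (X + C l) * sub2 F.P (C l) X) x) := by
  rw [split_pt DR, HB.add_right, bilin_aeval_right HB, HG.xr, HG.xx, aeval_prodMap]
  simp

theorem c_lr (l : ℂ) (a b : R) (p : ℂ[X]) : B l (a, aeval DQ p x) (b, 0)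
    = (br l a b + p.eval (-l) • F.Tm l b,
      aeval DQ (p.eval (-l) • sub2 (g b) (C l) X) x) := by
  rw [split_pt DR, HB.add_left, bilin_aeval_left HB, HG.rr, HG.xr]
  simp

theorem c_lx (l : ℂ) (a : R) (p : ℂ[X]) : B l (a, aeval DQ p x) (0, x)
    = (F.Dm l a + p.eval (-l) • F.Q0 l,
      aeval DQ (sub2 (F.h a) (C l) X + p.eval (-l) • sub2 F.P (C l) X) x) := by
  rw [split_pt DR, HB.add_left, bilin_aeval_left HB, HG.rx, HG.xx]
  simp

variable (hinj : ∀ p q : ℂ[X], aeval DQ p x = aeval DQ q x → p = q)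
include hinj

theorem j_abx (l m : ℂ) (a b : R) : Jac B l m (a, 0) (b, 0) (0, x) ↔
    br l a (F.Dm m b) + aeval DR (sub2 (F.h b) (C m) (C l + X)) (F.Dm l a)
      = F.Dm (l + m) (br l a b) +
        (br m b (F.Dm l a) + aeval DR (sub2 (F.h a) (C l) (C m + X)) (F.Dm m b)) ∧
    sub2 (F.h b) (C m) (C l + X) * sub2 (F.h a) (C l) X
      = sub2 (F.h (br l a b)) (C (l + m)) X
        + sub2 (F.h a) (C l) (C m + X) * sub2 (F.h b) (C m) X := by
  unfold Jac
  rw [HG.rx, HG.rr, HG.rx, HG.rx, c_r HB HG, c_r HB HG, pair_iff hinj]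
  simp only [sub2_shift]

theorem j_axb (l m : ℂ) (a b : R) : Jac B l m (a, 0) (0, x) (b, 0) ↔
    br l a (F.Tm m b) + aeval DR (sub2 (g b) (C m) (C l + X)) (F.Dm l a)
      = (br (l + m) (F.Dm l a) b + ev2 (F.h a) l (-l - m) • F.Tm (l + m) b)
        + F.Tm m (br l a b) ∧
    sub2 (g b) (C m) (C l + X) * sub2 (F.h a) (C l) X
      = ev2 (F.h a) l (-l - m) • sub2 (g b) (C (l + m)) X + sub2 (g (br l a b)) (C m) X := by
  unfold Jac
  rw [HG.xr, HG.rr, HG.rx, c_r HB HG, c_lr HB HG, HG.xr, pair_iff hinj]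
  simp only [sub2_shift, ev2_eval, neg_add']

theorem j_xab (l m : ℂ) (a b : R) : Jac B m l (0, x) (a, 0) (b, 0) ↔
    F.Tm m (br l a b)
      = (br (l + m) (F.Tm m a) b + ev2 (g a) m (-l - m) • F.Tm (l + m) b)
        + (br l a (F.Tm m b) + aeval DR (sub2 (g b) (C m) (C l + X)) (F.Dm l a)) ∧
    sub2 (g (br l a b)) (C m) X
      = ev2 (g a) m (-l - m) • sub2 (g b) (C (l + m)) X
       + sub2 (g b) (C m) (C l + X) * sub2 (F.h a) (C l) X := by
  unfold Jac
  rw [HG.rr, HG.xr, HG.xr, HG.xr, c_r HB HG, c_lr HB HG, pair_iff hinj, add_comm m l]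
  simp only [sub2_shift, ev2_eval, neg_add']

theorem j_axx (l m : ℂ) (a : R) : Jac B l m (a, 0) (0, x) (0, x) ↔
    br l a (F.Q0 m) + aeval DR (sub2 F.P (C m) (C l + X)) (F.Dm l a)
      = (F.Dm (l + m) (F.Dm l a) + ev2 (F.h a) l (-l - m) • F.Q0 (l + m))
        + (F.Tm m (F.Dm l a) + aeval DR (sub2 (F.h a) (C l) (C m + X)) (F.Q0 m)) ∧
    sub2 F.P (C m) (C l + X) * sub2 (F.h a) (C l) X
      = (sub2 (F.h (F.Dm l a)) (C (l + m)) X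
        + ev2 (F.h a) l (-l - m) • sub2 F.P (C (l + m)) X)
        + (sub2 (g (F.Dm l a)) (C m) X
        + sub2 (F.h a) (C l) (C m + X) * sub2 F.P (C m) X) := by
  unfold Jac
  rw [HG.xx, HG.rx, c_r HB HG, c_lx HB HG, c_x HB HG, pair_iff hinj]
  simp only [sub2_shift, ev2_eval, neg_add']

theorem j_xax (l m : ℂ) (a : R) : Jac B m l (0, x) (a, 0) (0, x) ↔
    F.Tm m (F.Dm l a) + aeval DR (sub2 (F.h a) (C l) (C m + X)) (F.Q0 m)
      = (F.Dm (l + m) (F.Tm m a) + ev2 (g a) m (-l - m) • F.Q0 (l + m))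
        + (br l a (F.Q0 m) + aeval DR (sub2 F.P (C m) (C l + X)) (F.Dm l a)) ∧
    sub2 (g (F.Dm l a)) (C m) X + sub2 (F.h a) (C l) (C m + X) * sub2 F.P (C m) X
      = (sub2 (F.h (F.Tm m a)) (C (l + m)) X
        + ev2 (g a) m (-l - m) • sub2 F.P (C (l + m)) X)
        + sub2 F.P (C m) (C l + X) * sub2 (F.h a) (C l) X := by
  unfold Jac
  rw [HG.xx, HG.rx, HG.xr, c_r HB HG, c_lx HB HG, c_x HB HG, pair_iff hinj, add_comm m l]
  simp only [sub2_shift, ev2_eval, neg_add']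

theorem j_xxa (l m : ℂ) (a : R) : Jac B l m (0, x) (0, x) (a, 0) ↔
    F.Tm l (F.Tm m a) + aeval DR (sub2 (g a) (C m) (C l + X)) (F.Q0 l)
      = (br (l + m) (F.Q0 l) a + ev2 F.P l (-l - m) • F.Tm (l + m) a)
        + (F.Tm m (F.Tm l a) + aeval DR (sub2 (g a) (C l) (C m + X)) (F.Q0 m)) ∧
    sub2 (g (F.Tm m a)) (C l) X + sub2 (g a) (C m) (C l + X) * sub2 F.P (C l) X
      = ev2 F.P l (-l - m) • sub2 (g a) (C (l + m)) X
        + (sub2 (g (F.Tm l a)) (C m) X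
        + sub2 (g a) (C l) (C m + X) * sub2 F.P (C m) X) := by
  unfold Jac
  rw [HG.xx, HG.xr, HG.xr, c_lr HB HG, c_x HB HG, c_x HB HG, pair_iff hinj]
  simp only [sub2_shift, ev2_eval, neg_add']

theorem j_xxx (l m : ℂ) : Jac B l m (0, x) (0, x) (0, x) ↔
    F.Tm l (F.Q0 m) + aeval DR (sub2 F.P (C m) (C l + X)) (F.Q0 l)
      = (F.Dm (l + m) (F.Q0 l) + ev2 F.P l (-l - m) • F.Q0 (l + m))
        + (F.Tm m (F.Q0 l) + aeval DR (sub2 F.P (C l) (C m + X)) (F.Q0 m)) ∧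
    sub2 (g (F.Q0 m)) (C l) X + sub2 F.P (C m) (C l + X) * sub2 F.P (C l) X
      = (sub2 (F.h (F.Q0 l)) (C (l + m)) X + ev2 F.P l (-l - m) • sub2 F.P (C (l + m)) X)
        + (sub2 (g (F.Q0 l)) (C m) X + sub2 F.P (C l) (C m + X) * sub2 F.P (C m) X) := by
  unfold Jac
  rw [HG.xx, HG.xx, c_lx HB HG, c_x HB HG, c_x HB HG, pair_iff hinj]
  simp only [sub2_shift, ev2_eval, neg_add']

theorem gen_of_jac (HJ : ∀ l m u v w, Jac B l m u v w) : Gen DR br F g where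
  abxQ l m a b := by
    linear_combination -((j_abx HB HG hinj l m a b).1 (HJ _ _ _ _ _)).2
  abxR l m a b := by
    linear_combination (norm := module) -((j_abx HB HG hinj l m a b).1 (HJ _ _ _ _ _)).1
  axbR l m a b := by
    linear_combination (norm := module) -((j_axb HB HG hinj l m a b).1 (HJ _ _ _ _ _)).1
  axbQ l m a b := by
    linear_combination (norm := module) -((j_axb HB HG hinj l m a b).1 (HJ _ _ _ _ _)).2
  xabR l m a b := by
    linear_combination (norm := module) -((j_axb HB HG hinj l m a b).1 (HJ _ _ _ _ _)).1
      - ((j_xab HB HG hinj l m a b).1 (HJ _ _ _ _ _)).1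
  xabQ l m a b := by
    linear_combination (norm := module) -((j_axb HB HG hinj l m a b).1 (HJ _ _ _ _ _)).2
      - ((j_xab HB HG hinj l m a b).1 (HJ _ _ _ _ _)).2
  axxR l m a := by
    linear_combination (norm := module) ((j_axx HB HG hinj l m a).1 (HJ _ _ _ _ _)).1
  axxQ l m a := by
    linear_combination (norm := module) ((j_axx HB HG hinj l m a).1 (HJ _ _ _ _ _)).2
  xaxR l m a := by
    linear_combination (norm := module) -((j_axx HB HG hinj l m a).1 (HJ _ _ _ _ _)).1
      - ((j_xax HB HG hinj l m a).1 (HJ _ _ _ _ _)).1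
  xaxQ l m a := by
    linear_combination (norm := module) -((j_axx HB HG hinj l m a).1 (HJ _ _ _ _ _)).2
      - ((j_xax HB HG hinj l m a).1 (HJ _ _ _ _ _)).2
  xxaR l m a := by
    linear_combination (norm := module) -((j_xxa HB HG hinj l m a).1 (HJ _ _ _ _ _)).1
  xxaQ l m a := by
    linear_combination (norm := module) -((j_xxa HB HG hinj l m a).1 (HJ _ _ _ _ _)).2
  xxxR l m := by
    linear_combination (norm := module) ((j_xxx HB HG hinj l m).1 (HJ _ _ _ _ _)).1
  xxxQ l m := by
    linear_combination (norm := module) ((j_xxx HB HG hinj l m).1 (HJ _ _ _ _ _)).2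

theorem jac_of_gen (hsurj : ∀ q : Q, ∃ p : ℂ[X], aeval DQ p x = q)
    (hLeib : IsLeibnizConformal DR br) (H : Gen DR br F g) :
    ∀ u v w l m, Jac B l m u v w := by
  have addu : ∀ v w u u', (∀ l m, Jac B l m u v w) → (∀ l m, Jac B l m u' v w) →
      ∀ l m, Jac B l m (u + u') v w := by
    intro v w u u' h h' l m
    have := h l m; have := h' l m
    simp only [Jac, HB.add_left, HB.add_right] at *
    simp only [*]; abel
  have addv : ∀ u w v v', (∀ l m, Jac B l m u v w) → (∀ l m, Jac B l m u v' w) →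
      ∀ l m, Jac B l m u (v + v') w := by
    intro v w u u' h h' l m
    have := h l m; have := h' l m
    simp only [Jac, HB.add_left, HB.add_right] at *
    simp only [*]; abel
  have addw : ∀ u v w w', (∀ l m, Jac B l m u v w) → (∀ l m, Jac B l m u v w') →
      ∀ l m, Jac B l m u v (w + w') := by
    intro v w u u' h h' l m
    have := h l m; have := h' l m
    simp only [Jac, HB.add_left, HB.add_right] at *
    simp only [*]; abel
  have su : ∀ v w (c : ℂ) u, (∀ l m, Jac B l m u v w) → ∀ l m, Jac B l m (c • u) v w := by
    intro v w c u h l m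
    have := h l m
    simp only [Jac, HB.smul_left, HB.smul_right] at *
    simp only [*, smul_add]
  have sv : ∀ u w (c : ℂ) v, (∀ l m, Jac B l m u v w) → ∀ l m, Jac B l m u (c • v) w := by
    intro v w c u h l m
    have := h l m
    simp only [Jac, HB.smul_left, HB.smul_right] at *
    simp only [*, smul_add]
  have sw : ∀ u v (c : ℂ) w, (∀ l m, Jac B l m u v w) → ∀ l m, Jac B l m u v (c • w) := by
    intro v w c u h l m
    have := h l m
    simp only [Jac, HB.smul_left, HB.smul_right] at *
    simp only [*, smul_add]
  have du : ∀ v w u, (∀ l m, Jac B l m u v w) →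
      ∀ l m, Jac B l m (LinearMap.prodMap DR DQ u) v w := by
    intro v w u h l m
    have := h l m
    simp only [Jac, HB.conf_left, HB.smul_left, HB.smul_right] at *
    rw [this]; module
  have dv : ∀ u w v, (∀ l m, Jac B l m u v w) →
      ∀ l m, Jac B l m u (LinearMap.prodMap DR DQ v) w := by
    intro u w v h l m
    have := h l m
    simp only [Jac, HB.conf_left, HB.conf_right, HB.add_left, HB.smul_left, HB.smul_right] at *
    rw [this]; module
  have dw : ∀ u v w, (∀ l m, Jac B l m u v w) →
      ∀ l m, Jac B l m u v (LinearMap.prodMap DR DQ w) := by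
    intro u v w h l m
    have := h l m
    simp only [Jac, HB.conf_left, HB.conf_right, HB.add_left, HB.add_right, HB.smul_left,
      HB.smul_right] at *
    rw [this, map_add]; module
  intro u v w
  refine ext_gen hsurj (fun u => ∀ l m, Jac B l m u v w) (fun a => ?_) ?_
    (addu v w) (su v w) (du v w) u
  · refine ext_gen hsurj (fun v => ∀ l m, Jac B l m (a, 0) v w) (fun b => ?_) ?_
      (addv _ w) (sv _ w) (dv _ w) v
    · refine ext_gen hsurj (fun w => ∀ l m, Jac B l m (a, 0) (b, 0) w) (fun c => ?_) ?_
        (addw _ _) (sw _ _) (dw _ _) w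
      · intro l m
        simp only [Jac, HG.rr, hLeib.jacobi l m a b c]; simp
      · intro l m
        rw [j_abx HB HG hinj]
        exact ⟨by linear_combination (norm := module) - H.abxR l m a b,
          by linear_combination (norm := module) - H.abxQ l m a b⟩
    · refine ext_gen hsurj (fun w => ∀ l m, Jac B l m (a, 0) (0, x) w) (fun c => ?_) ?_
        (addw _ _) (sw _ _) (dw _ _) w
      · intro l m
        rw [j_axb HB HG hinj]
        exact ⟨by linear_combination (norm := module) - H.axbR l m a c,
          by linear_combination (norm := module) - H.axbQ l m a c⟩
      · intro l m
        rw [j_axx HB HG hinj]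
        exact ⟨by linear_combination (norm := module) H.axxR l m a,
          by linear_combination (norm := module) H.axxQ l m a⟩
  · refine ext_gen hsurj (fun v => ∀ l m, Jac B l m (0, x) v w) (fun b => ?_) ?_
      (addv _ w) (sv _ w) (dv _ w) v
    · refine ext_gen hsurj (fun w => ∀ l m, Jac B l m (0, x) (b, 0) w) (fun c => ?_) ?_
        (addw _ _) (sw _ _) (dw _ _) w
      · intro m l
        rw [j_xab HB HG hinj]
        exact ⟨by linear_combination (norm := module) H.axbR l m b c - H.xabR l m b c,
          by linear_combination (norm := module) H.axbQ l m b c - H.xabQ l m b c⟩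
      · intro m l
        rw [j_xax HB HG hinj]
        exact ⟨by linear_combination (norm := module) - H.axxR l m b - H.xaxR l m b,
          by linear_combination (norm := module) - H.axxQ l m b - H.xaxQ l m b⟩
    · refine ext_gen hsurj (fun w => ∀ l m, Jac B l m (0, x) (0, x) w) (fun c => ?_) ?_
        (addw _ _) (sw _ _) (dw _ _) w
      · intro l m
        rw [j_xxa HB HG hinj]
        exact ⟨by linear_combination (norm := module) - H.xxaR l m c,
          by linear_combination (norm := module) - H.xxaQ l m c⟩
      · intro l m
        rw [j_xxx HB HG hinj]
        exact ⟨by linear_combination (norm := module) H.xxxR l m,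
          by linear_combination (norm := module) H.xxxQ l m⟩

end calcs
end gen

section constr
variable {R Q : Type*} [AddCommGroup R] [Module ℂ R] [AddCommGroup Q] [Module ℂ Q]
    {DR : Module.End ℂ R} {DQ : Module.End ℂ Q} {br : ℂ → R → R → R} {x : Q}

theorem exists_B (hbr : IsConformalBilin DR DR DR br)
    (hinj : ∀ p q : ℂ[X], aeval DQ p x = aeval DQ q x → p = q)
    (hsurj : ∀ q : Q, ∃ p : ℂ[X], aeval DQ p x = q)
    (F : FlagData R DR) (g : R →ₗ[ℂ] CPoly2) (hg : ∀ a, g (DR a) = (X + C X) * g a) :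
    ∃ B : ℂ → R × Q → R × Q → R × Q,
      IsConformalBilin (LinearMap.prodMap DR DQ) (LinearMap.prodMap DR DQ)
        (LinearMap.prodMap DR DQ) B ∧ HasGen DR DQ br x B F g := by
  choose co hco using hsurj
  have co_add : ∀ q q', co (q + q') = co q + co q' := fun q q' => hinj _ _ (by simp [hco])
  have co_smul : ∀ (c : ℂ) q, co (c • q) = c • co q := fun c q => hinj _ _ (by simp [hco])
  have co_D : ∀ q, co (DQ q) = X * co q := fun q => hinj _ _ (by simp [hco])
  have co_x : co x = 1 := hinj _ _ (by simp [hco])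
  have co_0 : co 0 = 0 := hinj _ _ (by simp [hco])
  have br0l : ∀ l b, br l 0 b = 0 := fun l b => by simpa using hbr.smul_left l 0 0 b
  have br0r : ∀ l b, br l b 0 = 0 := fun l b => by simpa using hbr.smul_right l 0 b 0
  have D0 : ∀ l, F.Dm l 0 = 0 := fun l => (F.Dm_lin l).map_zero
  have T0 : ∀ l, F.Tm l 0 = 0 := fun l => (F.Tm_lin l).map_zero
  set DE := LinearMap.prodMap DR DQ with hDE
  let dh : ℂ → R → R × Q := fun l a => (F.Dm l a, aeval DQ (sub2 (F.h a) (C l) X) x)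
  let tg : ℂ → R → R × Q := fun l a => (F.Tm l a, aeval DQ (sub2 (g a) (C l) X) x)
  let qp : ℂ → R × Q := fun l => (F.Q0 l, aeval DQ (sub2 F.P (C l) X) x)
  have dh_add : ∀ l a a', dh l (a + a') = dh l a + dh l a' := fun l a a' => by
    simp [dh, (F.Dm_lin l).map_add, sub2_add]
  have dh_smul : ∀ l (c : ℂ) a, dh l (c • a) = c • dh l a := fun l a a' => by
    simp [dh, (F.Dm_lin l).map_smul, sub2_smul]
  have dh_D : ∀ l a, dh l (DR a) = (-l) • dh l a := fun l a => by
    simp only [dh, F.Dm_conf, F.h_conf, sub2_mul, sub2_neg, sub2_X]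
    simp
  have tg_add : ∀ l a a', tg l (a + a') = tg l a + tg l a' := fun l a a' => by
    simp [tg, (F.Tm_lin l).map_add, sub2_add]
  have tg_smul : ∀ l (c : ℂ) a, tg l (c • a) = c • tg l a := fun l a a' => by
    simp [tg, (F.Tm_lin l).map_smul, sub2_smul]
  have tg_D : ∀ l a, tg l (DR a) = DE (tg l a) + l • tg l a := fun l a => by
    simp only [tg, F.Tm_conf, hg, sub2_mul, sub2_add, sub2_CX, sub2_X]
    simp [hDE, add_comm]
  have pf : ∀ p : CPoly2, IsPolyFun (fun l => aeval DQ (sub2 p (C l) X) x) := fun p =>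
    (IsPolyFun.sub2 p).map ((LinearMap.applyₗ x).comp (aeval DQ).toLinearMap)
  have dh_p : ∀ a, IsPolyFun (fun l => dh l a) := fun a => (F.Dm_poly a).pair (pf _)
  have tg_p : ∀ a, IsPolyFun (fun l => tg l a) := fun a => (F.Tm_poly a).pair (pf _)
  have qp_p : IsPolyFun (fun l => qp l) := (F.Q0_poly).pair (pf _)
  have dh_0 : ∀ l, dh l 0 = 0 := fun l => by simpa using dh_smul l 0 0
  have tg_0 : ∀ l, tg l 0 = 0 := fun l => by simpa using tg_smul l 0 0
  refine ⟨fun l u v => (br l u.1 v.1, 0) + aeval DE ((co v.2).comp (X + C l)) (dh l u.1)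
    + (co u.2).eval (-l) • tg l v.1
    + (co u.2).eval (-l) • aeval DE ((co v.2).comp (X + C l)) (qp l), ?_, ?_⟩
  · have hdh : dh = dh := rfl
    clear_value dh tg qp
    constructor
    · intro l a a' b
      have : ((br l (a.1 + a'.1) b.1, 0) : R × Q) = (br l a.1 b.1, 0) + (br l a'.1 b.1, 0) := by
        simp [hbr.add_left]
      simp only [Prod.fst_add, Prod.snd_add, this, dh_add, co_add, map_add, eval_add, add_smul]
      abel
    · intro l c a b
      have : ((br l (c • a.1) b.1, 0) : R × Q) = c • (br l a.1 b.1, 0) := by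
        simp [hbr.smul_left]
      simp only [Prod.smul_fst, Prod.smul_snd, this, dh_smul, co_smul, map_smul, eval_smul,
        smul_add, smul_eq_mul, mul_smul]
    · intro l a b b'
      have : ((br l a.1 (b.1 + b'.1), 0) : R × Q) = (br l a.1 b.1, 0) + (br l a.1 b'.1, 0) := by
        simp [hbr.add_right]
      simp only [Prod.fst_add, Prod.snd_add, this, tg_add, co_add, add_comp, map_add,
        LinearMap.add_apply, smul_add]
      abel
    · intro l c a b
      have : ((br l a.1 (c • b.1), 0) : R × Q) = c • (br l a.1 b.1, 0) := by
        simp [hbr.smul_right]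
      simp only [Prod.smul_fst, Prod.smul_snd, this, tg_smul, co_smul, smul_comp, map_smul,
        LinearMap.smul_apply]
      module
    · intro a b
      refine IsPolyFun.add (IsPolyFun.add (IsPolyFun.add ?_ ?_) ?_) ?_
      · exact (hbr.poly _ _).map (LinearMap.inl ℂ R Q)
      · exact (dh_p _).shift _ _
      · exact (tg_p _).evalneg _
      · exact (qp_p.shift _ _).evalneg _
    · intro l a b
      have : ((br l (DR a.1) b.1, 0) : R × Q) = (-l) • (br l a.1 b.1, 0) := by
        simp [hbr.conf_left]
      have h1 : (DE a).1 = DR a.1 := rfl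
      have h2 : (DE a).2 = DQ a.2 := rfl
      simp only [h1, h2, this, dh_D, co_D, eval_mul, eval_X, map_smul]
      module
    · intro l a b
      have : ((br l a.1 (DR b.1), 0) : R × Q) = DE (br l a.1 b.1, 0) + l • (br l a.1 b.1, 0) := by
        simp [hbr.conf_right, hDE]
      have h1 : (DE b).1 = DR b.1 := rfl
      have h2 : (DE b).2 = DQ b.2 := rfl
      simp only [h1, h2, this, tg_D, co_D, mul_comp, X_comp, map_mul, map_add, aeval_X, aeval_C,
        Module.End.mul_apply, LinearMap.add_apply, map_smul, Module.algebraMap_end_apply]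
      module
  · constructor
    · intro l a b
      simp [co_0]
    · intro l a
      simp [co_0, co_x, br0r, tg_0, dh]
    · intro l a
      simp [co_0, co_x, br0l, dh_0, tg]
    · intro l
      simp [co_x, br0l, dh_0, tg_0, qp]

theorem bracket_unique (hsurj : ∀ q : Q, ∃ p : ℂ[X], aeval DQ p x = q)
    {B B' : ℂ → R × Q → R × Q → R × Q}
    {F : FlagData R DR} {g : R →ₗ[ℂ] CPoly2}
    (HB : IsConformalBilin (LinearMap.prodMap DR DQ) (LinearMap.prodMap DR DQ)
      (LinearMap.prodMap DR DQ) B) (HG : HasGen DR DQ br x B F g)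
    (HB' : IsConformalBilin (LinearMap.prodMap DR DQ) (LinearMap.prodMap DR DQ)
      (LinearMap.prodMap DR DQ) B') (HG' : HasGen DR DQ br x B' F g) : B = B' := by
  funext l u v
  refine ext_gen (DR := DR) hsurj (fun u => B l u v = B' l u v) (fun a => ?_) ?_ ?_ ?_ ?_ u
  · refine ext_gen (DR := DR) hsurj (fun v => B l _ v = B' l _ v) (fun b => ?_) ?_ ?_ ?_ ?_ v
    · rw [HG.rr, HG'.rr]
    · rw [HG.rx, HG'.rx]
    · intro u v h h'; rw [HB.add_right, HB'.add_right, h, h']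
    · intro c u h; rw [HB.smul_right, HB'.smul_right, h]
    · intro u h; rw [HB.conf_right, HB'.conf_right, h]
  · refine ext_gen (DR := DR) hsurj (fun v => B l _ v = B' l _ v) (fun b => ?_) ?_ ?_ ?_ ?_ v
    · rw [HG.xr, HG'.xr]
    · rw [HG.xx, HG'.xx]
    · intro u v h h'; rw [HB.add_right, HB'.add_right, h, h']
    · intro c u h; rw [HB.smul_right, HB'.smul_right, h]
    · intro u h; rw [HB.conf_right, HB'.conf_right, h]
  · intro u v h h'; rw [HB.add_left, HB'.add_left, h, h']
  · intro c u h; rw [HB.smul_left, HB'.smul_left, h]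
  · intro u h; rw [HB.conf_left, HB'.conf_left, h]

theorem exists_cpoly (hsurj : ∀ q : Q, ∃ p : ℂ[X], aeval DQ p x = q) {f : ℂ → Q}
    (hf : IsPolyFun f) : ∃ p : CPoly2, ∀ l, aeval DQ (sub2 p (C l) X) x = f l := by
  obtain ⟨N, c, h⟩ := hf
  choose co hco using hsurj
  refine ⟨∑ i ∈ Finset.range N, X ^ i * C (co (c i)), fun l => ?_⟩
  rw [sub2_eval_C, h, eval_finsetSum]
  simp only [eval_mul, eval_pow, eval_X, eval_C, map_sum, LinearMap.sum_apply]
  refine Finset.sum_congr rfl fun i _ => ?_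
  rw [← C_pow, ← smul_eq_C_mul, map_smul, LinearMap.smul_apply, hco]

theorem exists_lin (hinj : ∀ p q : ℂ[X], aeval DQ p x = aeval DQ q x → p = q)
    (hsurj : ∀ q : Q, ∃ p : ℂ[X], aeval DQ p x = q) (f : ℂ → R → Q)
    (hadd : ∀ l a a', f l (a + a') = f l a + f l a')
    (hsmul : ∀ l (c : ℂ) a, f l (c • a) = c • f l a)
    (hf : ∀ a, IsPolyFun (fun l => f l a)) :
    ∃ h : R →ₗ[ℂ] CPoly2, ∀ l a, aeval DQ (sub2 (h a) (C l) X) x = f l a := by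
  choose h hh using fun a => exists_cpoly hsurj (hf a)
  refine ⟨⟨⟨h, fun a b => ?_⟩, fun c a => ?_⟩, fun l a => hh a l⟩
  · exact CPoly2_ext fun l => hinj _ _ (by simp [sub2_add, hh, hadd])
  · exact CPoly2_ext fun l => hinj _ _ (by simp [sub2_smul, hh, hsmul])

theorem exists_F (hinj : ∀ p q : ℂ[X], aeval DQ p x = aeval DQ q x → p = q)
    (hsurj : ∀ q : Q, ∃ p : ℂ[X], aeval DQ p x = q)
    {B : ℂ → R × Q → R × Q → R × Q}
    (HB : IsConformalBilin (LinearMap.prodMap DR DQ) (LinearMap.prodMap DR DQ)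
      (LinearMap.prodMap DR DQ) B) (hrr : ∀ l a b, B l (a, 0) (b, 0) = (br l a b, 0)) :
    ∃ (F : FlagData R DR) (g : R →ₗ[ℂ] CPoly2), HasGen DR DQ br x B F g := by
  have ha : ∀ a a' : R, ((a + a', 0) : R × Q) = (a, 0) + (a', 0) := by simp
  have hs : ∀ (c : ℂ) (a : R), ((c • a, 0) : R × Q) = c • (a, 0) := by simp
  have hD : ∀ a : R, ((DR a, 0) : R × Q) = LinearMap.prodMap DR DQ (a, 0) := by simp
  obtain ⟨h, hh⟩ := exists_lin hinj hsurj (fun l (a : R) => (B l (a, 0) (0, x)).2)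
    (fun l a a' => by simp only [ha, HB.add_left, Prod.snd_add])
    (fun l c a => by simp only [hs, HB.smul_left, Prod.smul_snd])
    (fun a => (HB.poly _ _).map (LinearMap.snd ℂ R Q))
  obtain ⟨g, hg⟩ := exists_lin hinj hsurj (fun l (a : R) => (B l (0, x) (a, 0)).2)
    (fun l a a' => by simp only [ha, HB.add_right, Prod.snd_add])
    (fun l c a => by simp only [hs, HB.smul_right, Prod.smul_snd])
    (fun a => (HB.poly _ _).map (LinearMap.snd ℂ R Q))
  obtain ⟨P, hP⟩ := exists_cpoly hsurj ((HB.poly (0, x) (0, x)).map (LinearMap.snd ℂ R Q))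
  refine ⟨⟨h, fun l a => (B l (a, 0) (0, x)).1, fun l a => (B l (0, x) (a, 0)).1,
    fun l => (B l (0, x) (0, x)).1, P, ?_, ?_, ?_, ?_, ?_, ?_, ?_, ?_⟩, g, ?_⟩
  · intro a
    refine CPoly2_ext fun l => hinj _ _ ?_
    rw [hh, hD, HB.conf_left, sub2_mul, sub2_neg, sub2_X]
    simp [hh]
  · intro l
    exact ⟨fun a a' => by simp only [ha, HB.add_left, Prod.fst_add],
      fun c a => by simp only [hs, HB.smul_left, Prod.smul_fst]⟩
  · exact fun a => (HB.poly _ _).map (LinearMap.fst ℂ R Q)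
  · intro l a
    simp only [hD, HB.conf_left, Prod.smul_fst]
  · intro l
    exact ⟨fun a a' => by simp only [ha, HB.add_right, Prod.fst_add],
      fun c a => by simp only [hs, HB.smul_right, Prod.smul_fst]⟩
  · exact fun a => (HB.poly _ _).map (LinearMap.fst ℂ R Q)
  · intro l a
    simp only [hD, HB.conf_right, Prod.fst_add, Prod.smul_fst]
    simp
  · exact (HB.poly _ _).map (LinearMap.fst ℂ R Q)
  · constructor
    · exact hrr
    · intro l a; ext
      · rfl
      · exact (hh l a).symm
    · intro l a; ext
      · rfl
      · exact (hg l a).symm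
    · intro l; ext
      · rfl
      · exact (hP l).symm

theorem exists_LCA (hLeib : IsLeibnizConformal DR br)
    (hinj : ∀ p q : ℂ[X], aeval DQ p x = aeval DQ q x → p = q)
    (hsurj : ∀ q : Q, ∃ p : ℂ[X], aeval DQ p x = q)
    (F : FlagData R DR) (g : R →ₗ[ℂ] CPoly2) (hg : ∀ a, g (DR a) = (X + C X) * g a)
    (H : Gen DR br F g) : ∃ A : LCAOn R Q DR DQ br, HasGen DR DQ br x A.brE F g := by
  obtain ⟨B, HB, HG⟩ := exists_B hLeib.bilin hinj hsurj F g hg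
  exact ⟨⟨B, ⟨HB, fun l m a b c => jac_of_gen HB HG hinj hsurj hLeib H a b c l m⟩, HG.rr⟩, HG⟩

theorem LCA_unique (hsurj : ∀ q : Q, ∃ p : ℂ[X], aeval DQ p x = q)
    {A A' : LCAOn R Q DR DQ br} {F : FlagData R DR} {g : R →ₗ[ℂ] CPoly2}
    (h : HasGen DR DQ br x A.brE F g) (h' : HasGen DR DQ br x A'.brE F g) : A = A' := by
  have := bracket_unique hsurj A.leib.bilin h A'.leib.bilin h'
  cases A; cases A'; cases this; rfl

theorem conf_ntwist (F : FlagData R DR) (a : R) :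
    (ntwist ∘ₗ F.h) (DR a) = (X + C X) * (ntwist ∘ₗ F.h) a := by
  refine CPoly2_ext fun l => ?_
  simp only [LinearMap.comp_apply, F.h_conf, sub2_ntwist, sub2_mul, sub2_add, sub2_neg, sub2_X,
    sub2_CX]
  ring

theorem ev2_ntwist (p : CPoly2) (l d : ℂ) : ev2 (ntwist p) l d = - ev2 p (-l - d) d := by
  rw [← ev2_eval, sub2_ntwist, eval_neg, sub2_eval]; simp

theorem dichotomy {F : FlagData R DR} {g : R →ₗ[ℂ] CPoly2} (H : Gen DR br F g) :
    g = 0 ∨ g = ntwist ∘ₗ F.h := by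
  by_cases h0 : g = 0
  · exact Or.inl h0
  right
  obtain ⟨b, hb⟩ : ∃ b, g b ≠ 0 := by
    by_contra! hc
    exact h0 (LinearMap.ext hc)
  have hfin : {d : ℂ | sub2 (g b) (C (-d)) X = 0}.Finite := by
    have h1 : {y : ℂ[X] | (g b).IsRoot y}.Finite := Polynomial.finite_setOfPred_isRoot hb
    refine (h1.preimage (f := fun d : ℂ => (C (-d) : ℂ[X])) ?_).subset ?_
    · intro d _ e _ h
      simpa using Polynomial.C_injective h
    · intro d hd
      have hd' : sub2 (g b) (C (-d)) X = 0 := hd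
      rw [sub2_eval_C] at hd'
      exact hd'
  ext1 a
  refine CPoly2_ext fun m => ?_
  refine Polynomial.eq_of_infinite_eval_eq _ _ (hfin.infinite_compl.mono ?_)
  intro d hd
  have := H.xabQ (-d - m) m a b
  rw [smul_eq_zero] at this
  have e1 : -d - m + m = -d := by ring
  have e2 : -(-d - m) - m = d := by ring
  rw [e1, e2] at this
  have := this.resolve_right hd
  show eval d _ = eval d _
  rw [ev2_eval, ev2_eval, LinearMap.comp_apply, ev2_ntwist, show -m - d = -d - m by ring]
  linear_combination this

theorem flag1_iff (F : FlagData R DR) : IsFlag1 DR br F ↔ Gen DR br F 0 := by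
  constructor
  · rintro ⟨h1, h2, h3, h4, h5, h6, h7, h8, h9, h10, h11⟩
    constructor <;> try simp only [LinearMap.zero_apply, sub2_zero, map_zero, zero_mul, mul_zero,
      smul_zero, add_zero, zero_add, sub_zero, show ∀ l d, ev2 0 l d = 0 by simp [ev2],
      implies_true]
    · exact h1
    · exact h2
    · exact h3
    · intro l m a b
      linear_combination (norm := module) h3 l m a b - h4 l m a b
    · exact h6
    · exact h5
    · exact h7
    · exact h8
    · exact h9
    · exact h10
    · intro l m
      linear_combination (norm := module) - h11 l m
  · rintro ⟨h1, h2, h3, h4, h5, h6, h7, h8, h9, h10, h11, h12, h13, h14⟩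
    simp only [LinearMap.zero_apply, sub2_zero, map_zero, zero_mul, mul_zero,
      smul_zero, add_zero, zero_add, sub_zero, show ∀ l d, ev2 0 l d = 0 by simp [ev2],
      implies_true] at *
    refine ⟨h1, h2, h3, ?_, h8, h7, h9, h10, h11, h13, ?_⟩
    · intro l m a b
      linear_combination (norm := module) h3 l m a b - h5 l m a b
    · intro l m
      linear_combination (norm := module) - h14 l m

theorem flag2_iff (F : FlagData R DR) :
    IsFlag2 DR br F ↔ F.h ≠ 0 ∧ Gen DR br F (ntwist ∘ₗ F.h) := by
  have e0 : ∀ l m : ℂ, -m - (-l - m) = l := by intros; ring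
  have e1 : ∀ l m : ℂ, -C m - (C l + X) = (-(C l) - C m - X : ℂ[X]) := by intros; ring
  have e2 : ∀ l m : ℂ, -C m - C l - X = (-(C l) - C m - X : ℂ[X]) := by intros; ring
  have e3 : ∀ l m : ℂ, -C (l + m) - X = (-(C l) - C m - X : ℂ[X]) := by
    intros; rw [C_add]; ring
  constructor
  · rintro ⟨hne, h1, h2, h6, h10, g1, g2, g3, g4, g5, g6, g7, g8⟩
    refine ⟨hne, ?_⟩
    constructor <;> try simp only [LinearMap.comp_apply, sub2_ntwist, ev2_ntwist, e0, e1, e3,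
      add_neg_cancel, zero_smul, add_zero, zero_add, implies_true, map_neg, LinearMap.neg_apply,
      neg_mul, smul_neg, sub_neg_eq_add, neg_zero]
    · exact h1
    · exact h2
    · intro l m a b
      linear_combination (norm := module) g1 l m a b
    · intro l m a b
      refine poly_ext fun d => ?_
      have := congrArg (eval d) (h1 l (-l - m - d) a b)
      simp only [eval_neg, eval_sub, eval_mul, eval_smul, sub2_eval, eval_add, eval_C,
        eval_X, smul_eq_mul] at this ⊢
      rw [show l + (-l - m - d) = -m - d by ring, show -l - m - d + d = -l - m by ring] at this
      linear_combination -this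
    · exact g2
    · exact h6
    · intro l m a
      linear_combination (norm := module) g3 l m a
    · exact g4
    · exact g5
    · intro l m a
      simp only [e2 l m]
      linear_combination (norm := module) g6 l m a
    · intro l m a
      simp only [e2 l m]
      linear_combination (norm := module) - g7 l m a
    · exact h10
    · intro l m
      linear_combination (norm := module) g8 l m
  · rintro ⟨hne, h1, h2, h3, h4, h5, h6, h7, h8, h9, h10, h11, h12, h13, h14⟩
    simp only [LinearMap.comp_apply, sub2_ntwist, ev2_ntwist, e0, e1, e3,
      add_neg_cancel, zero_smul, add_zero, zero_add, implies_true, map_neg,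
      LinearMap.neg_apply, neg_mul, smul_neg, sub_neg_eq_add] at h3 h5 h8 h9 h10 h11 h12 h14
    refine ⟨hne, h1, h2, h7, h13, ?_, h5, ?_, h9, h10, ?_, ?_, ?_⟩
    · intro l m a b
      linear_combination (norm := module) h3 l m a b
    · intro l m a
      linear_combination (norm := module) h8 l m a
    · intro l m a
      have h := h11 l m a
      simp only [e2 l m] at h
      linear_combination (norm := module) h
    · intro l m a
      have h := h12 l m a
      simp only [e2 l m] at h
      linear_combination (norm := module) - h
    · intro l m
      linear_combination (norm := module) h14 l m

theorem fc1_iff (F : FlagData R DR) (A : LCAOn R Q DR DQ br) :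
    IsFC1Of DR DQ br x F A ↔ HasGen DR DQ br x A.brE F 0 := by
  constructor
  · rintro ⟨h1, h2, h3⟩
    exact ⟨A.sub, h1, fun l a => by rw [h2]; simp [sub2_zero], h3⟩
  · rintro ⟨_, h1, h2, h3⟩
    exact ⟨h1, fun l a => by rw [h2]; simp [sub2_zero], h3⟩

theorem fc2_iff (F : FlagData R DR) (A : LCAOn R Q DR DQ br) :
    IsFC2Of DR DQ br x F A ↔ HasGen DR DQ br x A.brE F (ntwist ∘ₗ F.h) := by
  constructor
  · rintro ⟨h1, h2, h3⟩
    exact ⟨A.sub, h1, fun l a => by rw [h2]; simp [sub2_ntwist], h3⟩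
  · rintro ⟨_, h1, h2, h3⟩
    exact ⟨h1, fun l a => by rw [h2]; simp [sub2_ntwist], h3⟩

end constr

section rel
variable {R Q : Type*} [AddCommGroup R] [Module ℂ R] [AddCommGroup Q] [Module ℂ Q]
    {DR : Module.End ℂ R} {DQ : Module.End ℂ Q} {br : ℂ → R → R → R} {x : Q}

/-- general equivalence of data -/
structure GRel (DR : Module.End ℂ R) (br : ℂ → R → R → R) (F : FlagData R DR)
    (g : R →ₗ[ℂ] CPoly2) (F' : FlagData R DR) (g' : R →ₗ[ℂ] CPoly2) (u : R) (β : ℂ) : Prop where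
  eh : F.h = F'.h
  eg : g = g'
  eD : ∀ (l : ℂ) (a : R),
    F.Dm l a = br l a u + β • F'.Dm l a - aeval DR (sub2 (F.h a) (C l) X) u
  eT : ∀ (l : ℂ) (a : R),
    F.Tm l a = br l u a + β • F'.Tm l a - aeval DR (sub2 (g a) (C l) X) u
  eP : F.P = F'.h u + g' u + β • F'.P
  eQ : ∀ l : ℂ, F.Q0 l
    = br l u u + β • F'.Dm l u + β • F'.Tm l u + β ^ 2 • F'.Q0 l
      - aeval DR (sub2 F.P (C l) X) u

theorem rel1_iff (F F' : FlagData R DR) (u : R) (β : ℂ) :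
    FlagRel1Via DR br F F' u β ↔ GRel DR br F 0 F' 0 u β := by
  constructor
  · rintro ⟨h1, h2, h3, h4, h5⟩
    exact ⟨h1, rfl, h2, fun l a => by rw [h3]; simp [sub2_zero], by rw [h4]; simp, h5⟩
  · rintro ⟨h1, -, h2, h3, h4, h5⟩
    exact ⟨h1, h2, fun l a => by rw [h3]; simp [sub2_zero], by rw [h4]; simp, h5⟩

theorem rel2_iff (F F' : FlagData R DR) (u : R) (β : ℂ) :
    FlagRel2Via DR br F F' u β ↔ GRel DR br F (ntwist ∘ₗ F.h) F' (ntwist ∘ₗ F'.h) u β := by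
  have e : ∀ p, ntwist p = - twistL p := fun _ => rfl
  constructor
  · rintro ⟨h1, h2, h3, h4, h5⟩
    exact ⟨h1, by rw [h1], h2, fun l a => by rw [h3]; simp [sub2_ntwist],
      by rw [h4, LinearMap.comp_apply, e, sub_eq_add_neg], h5⟩
  · rintro ⟨h1, -, h2, h3, h4, h5⟩
    exact ⟨h1, h2, fun l a => by rw [h3]; simp [sub2_ntwist],
      by rw [h4, LinearMap.comp_apply, e, sub_eq_add_neg], h5⟩

theorem hom_aeval {φ : R × Q →ₗ[ℂ] R × Q} (h : PreservesD (LinearMap.prodMap DR DQ) φ)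
    (p : ℂ[X]) (u : R × Q) :
    φ (aeval (LinearMap.prodMap DR DQ) p u) = aeval (LinearMap.prodMap DR DQ) p (φ u) := by
  induction p using Polynomial.induction_on' generalizing u with
  | add p q hp hq => simp only [map_add, LinearMap.add_apply, hp, hq]
  | monomial n c =>
    induction n generalizing u with
    | zero => simp
    | succ n ih =>
      rw [← Polynomial.monomial_mul_X]
      simp only [map_mul, Module.End.mul_apply, aeval_X, ih]
      rw [h]

variable (hinj : ∀ p q : ℂ[X], aeval DQ p x = aeval DQ q x → p = q)
    (hsurj : ∀ q : Q, ∃ p : ℂ[X], aeval DQ p x = q)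
    {A A' : LCAOn R Q DR DQ br} {F F' : FlagData R DR} {g g' : R →ₗ[ℂ] CPoly2}
    (HG : HasGen DR DQ br x A.brE F g) (HG' : HasGen DR DQ br x A'.brE F' g')
    {φ : R × Q →ₗ[ℂ] R × Q} {u : R} {β : ℂ} (hβ : β ≠ 0)
    (hφ : ∀ a p, φ (a, aeval DQ p x) = (a + aeval DR p u, aeval DQ (C β * p) x))
include hinj

theorem pair_eq_iff (a b : R) (p q : ℂ[X]) :
    ((a, aeval DQ p x) : R × Q) = (b, aeval DQ q x) ↔ a = b ∧ p = q := by
  simp only [Prod.mk.injEq]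
  exact and_congr Iff.rfl ⟨fun h => hinj _ _ h, fun h => h ▸ rfl⟩

include HG HG' hβ hφ

theorem gens_rx (l : ℂ) (a : R) :
    φ (A.brE l (a, 0) (0, x)) = A'.brE l (φ (a, 0)) (φ (0, x)) ↔
    F.Dm l a = br l a u + β • F'.Dm l a - aeval DR (sub2 (F.h a) (C l) X) u ∧
    sub2 (F.h a) (C l) X = sub2 (F'.h a) (C l) X := by
  have h0 : φ (a, 0) = (a, 0) := by simpa using hφ a 0
  have hx : φ (0, x) = (u, aeval DQ (C β) x) := by simpa using hφ 0 1
  rw [HG.rx, hφ, h0, hx, c_r A'.leib.bilin HG', pair_eq_iff hinj, eq_sub_iff_add_eq]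
  simp [hβ]

theorem gens_xr (l : ℂ) (a : R) :
    φ (A.brE l (0, x) (a, 0)) = A'.brE l (φ (0, x)) (φ (a, 0)) ↔
    F.Tm l a = br l u a + β • F'.Tm l a - aeval DR (sub2 (g a) (C l) X) u ∧
    sub2 (g a) (C l) X = sub2 (g' a) (C l) X := by
  have h0 : φ (a, 0) = (a, 0) := by simpa using hφ a 0
  have hx : φ (0, x) = (u, aeval DQ (C β) x) := by simpa using hφ 0 1
  rw [HG.xr, hφ, h0, hx, c_lr A'.leib.bilin HG', pair_eq_iff hinj, eq_sub_iff_add_eq,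
    smul_eq_C_mul, eval_C]
  simp [hβ]

theorem gens_xx (l : ℂ) :
    φ (A.brE l (0, x) (0, x)) = A'.brE l (φ (0, x)) (φ (0, x)) ↔
    F.Q0 l = br l u u + β • F'.Dm l u + β • F'.Tm l u + β ^ 2 • F'.Q0 l
      - aeval DR (sub2 F.P (C l) X) u ∧
    sub2 F.P (C l) X = sub2 (F'.h u + g' u + β • F'.P) (C l) X := by
  have hx : φ (0, x) = (u, aeval DQ (C β) x) := by simpa using hφ 0 1
  have e : ((u, aeval DQ (C β) x) : R × Q) = (u, 0) + β • (0, x) := by simp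
  have e2 : A'.brE l (u, aeval DQ (C β) x) (u, aeval DQ (C β) x)
      = (br l u u + β • F'.Dm l u + β • F'.Tm l u + β ^ 2 • F'.Q0 l,
        aeval DQ (C β * sub2 (F'.h u + g' u + β • F'.P) (C l) X) x) := by
    have e3 : ∀ v, A'.brE l v (u, aeval DQ (C β) x)
        = A'.brE l v (u, 0) + β • A'.brE l v (0, x) := fun v => by
      rw [e, A'.leib.bilin.add_right, A'.leib.bilin.smul_right]
    rw [e3, c_lr A'.leib.bilin HG',
      c_lx A'.leib.bilin HG']
    ext
    · simp only [Prod.fst_add, Prod.smul_fst, eval_C]; module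
    · simp only [Prod.snd_add, Prod.smul_snd, eval_C]
      rw [← LinearMap.smul_apply, ← map_smul, ← LinearMap.add_apply, ← map_add]
      congr 2
      simp only [sub2_add, sub2_smul, ← smul_eq_C_mul]
      module
  rw [HG.xx, hφ, hx, e2, pair_eq_iff hinj, eq_sub_iff_add_eq]
  simp [hβ]

theorem grel_of_hom (hh : IsBracketHom A.brE A'.brE φ) : GRel DR br F g F' g' u β where
  eh := LinearMap.ext fun a => CPoly2_ext fun l =>
    ((gens_rx hinj HG HG' hβ hφ l a).1 (hh _ _ _)).2
  eg := LinearMap.ext fun a => CPoly2_ext fun l =>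
    ((gens_xr hinj HG HG' hβ hφ l a).1 (hh _ _ _)).2
  eD l a := ((gens_rx hinj HG HG' hβ hφ l a).1 (hh _ _ _)).1
  eT l a := ((gens_xr hinj HG HG' hβ hφ l a).1 (hh _ _ _)).1
  eP := CPoly2_ext fun l => ((gens_xx hinj HG HG' hβ hφ l).1 (hh _ _ _)).2
  eQ l := ((gens_xx hinj HG HG' hβ hφ l).1 (hh _ _ _)).1

include hsurj

theorem hom_of_grel (hD : PreservesD (LinearMap.prodMap DR DQ) φ)
    (H : GRel DR br F g F' g' u β) : IsBracketHom A.brE A'.brE φ := by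
  have h0 : ∀ a, φ (a, 0) = (a, 0) := fun a => by simpa using hφ a 0
  have HB := A.leib.bilin
  have HB' := A'.leib.bilin
  intro l v w
  refine ext_gen (DR := DR) hsurj (fun v => φ (A.brE l v w) = A'.brE l (φ v) (φ w))
    (fun a => ?_) ?_ ?_ ?_ ?_ v
  · refine ext_gen (DR := DR) hsurj (fun w => φ (A.brE l _ w) = A'.brE l _ (φ w))
      (fun b => ?_) ?_ ?_ ?_ ?_ w
    · rw [HG.rr, h0, h0, h0, HG'.rr]
    · rw [gens_rx hinj HG HG' hβ hφ]
      exact ⟨H.eD l a, by rw [H.eh]⟩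
    · intro u v h h'; rw [HB.add_right, map_add, map_add, HB'.add_right, h, h']
    · intro c u h; rw [HB.smul_right, map_smul, map_smul, HB'.smul_right, h]
    · intro u h; rw [HB.conf_right, hD, HB'.conf_right, map_add, hD, map_smul, h]
  · refine ext_gen (DR := DR) hsurj (fun w => φ (A.brE l _ w) = A'.brE l _ (φ w))
      (fun b => ?_) ?_ ?_ ?_ ?_ w
    · rw [gens_xr hinj HG HG' hβ hφ]
      exact ⟨H.eT l b, by rw [H.eg]⟩
    · rw [gens_xx hinj HG HG' hβ hφ]
      exact ⟨H.eQ l, by rw [H.eP]⟩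
    · intro u v h h'; rw [HB.add_right, map_add, map_add, HB'.add_right, h, h']
    · intro c u h; rw [HB.smul_right, map_smul, map_smul, HB'.smul_right, h]
    · intro u h; rw [HB.conf_right, hD, HB'.conf_right, map_add, hD, map_smul, h]
  · intro u v h h'; rw [HB.add_left, map_add, map_add, HB'.add_left, h, h']
  · intro c u h; rw [HB.smul_left, map_smul, map_smul, HB'.smul_left, h]
  · intro u h; rw [HB.conf_left, hD, HB'.conf_left, map_smul, h]

omit HG HG' hβ hφ

theorem exists_phi (hβ : β ≠ 0) : ∃ φ : R × Q →ₗ[ℂ] R × Q, Function.Bijective φ ∧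
    PreservesD (LinearMap.prodMap DR DQ) φ ∧
    (∀ a p, φ (a, aeval DQ p x) = (a + aeval DR p u, aeval DQ (C β * p) x)) := by
  choose co hco using hsurj
  have co_add : ∀ q q', co (q + q') = co q + co q' := fun q q' => hinj _ _ (by simp [hco])
  have co_smul : ∀ (c : ℂ) q, co (c • q) = c • co q := fun c q => hinj _ _ (by simp [hco])
  have co_D : ∀ q, co (DQ q) = X * co q := fun q => hinj _ _ (by simp [hco])
  have co_a : ∀ p, co (aeval DQ p x) = p := fun q => hinj _ _ (by simp [hco])
  refine ⟨⟨⟨fun v => (v.1 + aeval DR (co v.2) u, β • v.2), ?_⟩, ?_⟩, ⟨?_, ?_⟩, ?_, ?_⟩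
  · intro v w
    ext
    · simp [co_add]; abel
    · simp
  · intro c v
    ext
    · simp [co_smul]
    · exact smul_comm _ _ _
  · rintro ⟨a, q⟩ ⟨a', q'⟩ h
    simp only [LinearMap.coe_mk, AddHom.coe_mk, Prod.mk.injEq] at h
    obtain ⟨h1, h2⟩ := h
    have h2 := smul_right_injective Q hβ h2
    subst h2
    simpa using h1
  · rintro ⟨a, q⟩
    refine ⟨(a - aeval DR (co (β⁻¹ • q)) u, β⁻¹ • q), ?_⟩
    simp [hβ]
  · rintro ⟨a, q⟩
    simp [co_D]
  · intro a p
    simp [co_a]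

/-- combined isomorphism relation: co-stabilizing if `b` -/
def isoRel (b : Prop) (A A' : LCAOn R Q DR DQ br) : Prop :=
  ∃ φ : R × Q →ₗ[ℂ] R × Q, Function.Bijective φ ∧
    PreservesD (LinearMap.prodMap DR DQ) φ ∧ IsBracketHom A.brE A'.brE φ ∧
    StabilizesFst φ ∧ (b → CoStabilizesSnd φ)

theorem isoRel_iff (HG : HasGen DR DQ br x A.brE F g) (HG' : HasGen DR DQ br x A'.brE F' g')
    (b : Prop) : isoRel b A A' ↔ ∃ u β, β ≠ 0 ∧ (b → β = 1) ∧ GRel DR br F g F' g' u β := by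
  have x0 : ∀ p q : ℂ[X], aeval DQ p x = aeval DQ q x ↔ p = q :=
    fun p q => ⟨hinj _ _, fun h => h ▸ rfl⟩
  constructor
  · rintro ⟨φ, hb, hD, hh, hs, hc⟩
    obtain ⟨q, hq⟩ := hsurj (φ (0, x)).2
    have key : ∀ a p, φ (a, aeval DQ p x)
        = (a + aeval DR p (φ (0, x)).1, aeval DQ (p * q) x) := by
      intro a p
      rw [split_pt DR, map_add, hs a, hom_aeval hD, aeval_prodMap, ← hq]
      simp
    obtain ⟨⟨a, r⟩, hr⟩ := hb.2 (0, x)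
    obtain ⟨p, rfl⟩ := hsurj r
    rw [key] at hr
    have h1 : p * q = 1 := hinj _ _ (by simpa using congrArg Prod.snd hr)
    obtain ⟨β, hβ, rfl⟩ := Polynomial.isUnit_iff.1 (IsUnit.of_mul_eq_one_right p h1)
    have hβ0 : β ≠ 0 := hβ.ne_zero
    refine ⟨(φ (0, x)).1, β, hβ0, fun hb => ?_, ?_⟩
    · have := hc hb (0, x)
      rw [← hq] at this
      have := hinj (C β) 1 (by simpa using this)
      exact Polynomial.C_injective (by simpa using this)
    · exact grel_of_hom hinj HG HG' hβ0 (fun a p => by rw [key, mul_comm]) hh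
  · rintro ⟨u, β, hβ, hb, H⟩
    obtain ⟨φ, h1, h2, h3⟩ := exists_phi (DR := DR) (u := u) hinj hsurj hβ
    refine ⟨φ, h1, h2, hom_of_grel hinj hsurj HG HG' hβ h3 h2 H, fun a => by simpa using h3 a 0, ?_⟩
    rintro hb' ⟨a, q⟩
    obtain ⟨p, rfl⟩ := hsurj q
    rw [h3, hb hb']; simp

omit hinj hsurj in
theorem isoRel_equiv (b : Prop) : Equivalence (isoRel (DR := DR) (DQ := DQ) (br := br) b) where
  refl A := ⟨LinearMap.id, Function.bijective_id, fun _ => rfl, fun _ _ _ => rfl, fun _ => rfl,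
    fun _ _ => rfl⟩
  symm := by
    rintro A A' ⟨φ, hb, hD, hh, hs, hc⟩
    let e := LinearEquiv.ofBijective φ hb
    have he : ∀ v, e v = φ v := fun _ => rfl
    refine ⟨e.symm.toLinearMap, e.symm.bijective, fun v => ?_, fun l v w => ?_, fun a => ?_,
      fun h v => ?_⟩
    · apply hb.1
      show e (e.symm _) = φ _
      rw [hD]
      show _ = LinearMap.prodMap DR DQ (e (e.symm _))
      simp
    · apply hb.1
      show e (e.symm _) = φ _
      rw [hh]
      show _ = A'.brE l (e (e.symm _)) (e (e.symm _))
      simp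
    · apply hb.1
      show e (e.symm _) = φ _
      rw [hs]; simp
    · have := hc h (e.symm v)
      rw [← he, e.apply_symm_apply] at this
      exact this.symm
  trans := by
    rintro A A' A'' ⟨φ, hb, hD, hh, hs, hc⟩ ⟨φ', hb', hD', hh', hs', hc'⟩
    refine ⟨φ' ∘ₗ φ, hb'.comp hb, fun v => ?_, fun l v w => ?_, fun a => ?_, fun h v => ?_⟩
    · simp only [LinearMap.comp_apply]; rw [hD, hD']
    · simp only [LinearMap.comp_apply]; rw [hh, hh']
    · simp only [LinearMap.comp_apply]; rw [hs, hs']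
    · simp only [LinearMap.comp_apply]; rw [hc' h, hc h]

omit hinj hsurj in
theorem lcaEquiv_eq : lcaEquiv DR DQ br = isoRel False := by
  funext A A'; simp [lcaEquiv, isoRel]

omit hinj hsurj in
theorem lcaCohom_eq : lcaCohom DR DQ br = isoRel True := by
  funext A A'; simp [lcaCohom, isoRel]

end rel

theorem assemble {S1 S2 L : Type*} (r1 : S1 → S1 → Prop) (r2 : S2 → S2 → Prop)
    (rL : L → L → Prop) (heq : Equivalence rL) (P1 : S1 → L → Prop) (P2 : S2 → L → Prop)
    (ex1 : ∀ s, ∃ A, P1 s A) (ex2 : ∀ s, ∃ A, P2 s A)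
    (u1 : ∀ s A A', P1 s A → P1 s A' → A = A') (u2 : ∀ s A A', P2 s A → P2 s A' → A = A')
    (k1 : ∀ s s' A A', P1 s A → P1 s' A' → (rL A A' ↔ r1 s s'))
    (k2 : ∀ s s' A A', P2 s A → P2 s' A' → (rL A A' ↔ r2 s s'))
    (k12 : ∀ s s' A A', P1 s A → P2 s' A' → ¬ rL A A')
    (sur : ∀ A, (∃ s, P1 s A) ∨ ∃ s, P2 s A) :
    ∃ G : Quot r1 ⊕ Quot r2 → Quot rL, Function.Bijective G ∧
      (∀ s A, P1 s A → G (Sum.inl (Quot.mk _ s)) = Quot.mk _ A) ∧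
      (∀ s A, P2 s A → G (Sum.inr (Quot.mk _ s)) = Quot.mk _ A) := by
  choose c1 h1 using ex1
  choose c2 h2 using ex2
  have ex : ∀ A A', Quot.mk rL A = Quot.mk rL A' → rL A A' := fun A A' h =>
    (heq.eqvGen_iff).1 (Quot.eqvGen_exact h)
  refine ⟨Sum.elim
    (Quot.lift (fun s => Quot.mk _ (c1 s))
      fun s s' h => Quot.sound ((k1 _ _ _ _ (h1 s) (h1 s')).2 h))
    (Quot.lift (fun s => Quot.mk _ (c2 s))
      fun s s' h => Quot.sound ((k2 _ _ _ _ (h2 s) (h2 s')).2 h)), ⟨?_, ?_⟩, ?_, ?_⟩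
  · rintro (q | q) (q' | q') h <;> obtain ⟨s, rfl⟩ := Quot.exists_rep q <;>
      obtain ⟨s', rfl⟩ := Quot.exists_rep q'
    · exact congrArg Sum.inl (Quot.sound ((k1 _ _ _ _ (h1 s) (h1 s')).1 (ex _ _ h)))
    · exact absurd (ex _ _ h) (k12 _ _ _ _ (h1 s) (h2 s'))
    · exact absurd (heq.symm (ex _ _ h)) (k12 _ _ _ _ (h1 s') (h2 s))
    · exact congrArg Sum.inr (Quot.sound ((k2 _ _ _ _ (h2 s) (h2 s')).1 (ex _ _ h)))
  · rintro ⟨A⟩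
    rcases sur A with ⟨s, h⟩ | ⟨s, h⟩
    · exact ⟨Sum.inl (Quot.mk _ s), congrArg (Quot.mk rL) (u1 _ _ _ (h1 s) h)⟩
    · exact ⟨Sum.inr (Quot.mk _ s), congrArg (Quot.mk rL) (u2 _ _ _ (h2 s) h)⟩
  · exact fun s A h => congrArg (Quot.mk rL) (u1 _ _ _ (h1 s) h)
  · exact fun s A h => congrArg (Quot.mk rL) (u2 _ _ _ (h2 s) h)

theorem ntwist_eq_zero {p : CPoly2} (h : ntwist p = 0) : p = 0 := by
  have h2 : ntwist (ntwist p) = p := by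
    refine CPoly2_ext fun l => ?_
    rw [sub2_ntwist, sub2_ntwist, neg_neg]
    congr 1; ring
  rw [← h2, h, map_zero]


end helpers

/-- For `R = ℂ[∂]V` and `Q = ℂ[∂]x` free of rank one,
`CExtd(E,R) ≅ (F₁(R)/≡₁) ∪ (F₂(R)/≡₂)` and `CExtd'(E,R) ≅ (F₁(R)/≈₁) ∪ (F₂(R)/≈₂)`,
the bijections sending the class of a flag datum of the first (resp. second) kind to the
class of the Leibniz conformal algebra `FC₁` (resp. `FC₂`) it determines. -/
theorem cextd_classification_rank_one
    {R Q : Type*} [AddCommGroup R] [Module ℂ R] [AddCommGroup Q] [Module ℂ Q]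
    (DR : Module.End ℂ R) (DQ : Module.End ℂ Q)
    (br : ℂ → R → R → R) (hLeib : IsLeibnizConformal DR br)
    (ι : Type*) (v : ι → R)
    (hRfree : ∀ a : R, ∃! c : ι →₀ Polynomial ℂ,
      (c.sum fun i p => Polynomial.aeval DR p (v i)) = a)
    (x : Q) (hQfree : ∀ q : Q, ∃! p : Polynomial ℂ, Polynomial.aeval DQ p x = q) :
    -- each flag datum does determine a Leibniz conformal algebra structure on `E`
    (∀ s : {F : FlagData R DR // IsFlag1 DR br F},
      ∃ A : LCAOn R Q DR DQ br, IsFC1Of DR DQ br x s.1 A) ∧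
    (∀ s : {F : FlagData R DR // IsFlag2 DR br F},
      ∃ A : LCAOn R Q DR DQ br, IsFC2Of DR DQ br x s.1 A) ∧
    -- `CExtd(E,R) ≅ (F₁(R)/≡₁) ∪ (F₂(R)/≡₂)`
    (∃ G : Quot (fun s s' : {F : FlagData R DR // IsFlag1 DR br F} =>
              ∃ (u₀ : R) (β : ℂ), β ≠ 0 ∧ FlagRel1Via DR br s.1 s'.1 u₀ β) ⊕
           Quot (fun s s' : {F : FlagData R DR // IsFlag2 DR br F} =>
              ∃ (u₀ : R) (β : ℂ), β ≠ 0 ∧ FlagRel2Via DR br s.1 s'.1 u₀ β) →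
           Quot (lcaEquiv DR DQ br),
      Function.Bijective G ∧
      (∀ (s : {F : FlagData R DR // IsFlag1 DR br F}) (A : LCAOn R Q DR DQ br),
        IsFC1Of DR DQ br x s.1 A → G (Sum.inl (Quot.mk _ s)) = Quot.mk _ A) ∧
      (∀ (s : {F : FlagData R DR // IsFlag2 DR br F}) (A : LCAOn R Q DR DQ br),
        IsFC2Of DR DQ br x s.1 A → G (Sum.inr (Quot.mk _ s)) = Quot.mk _ A)) ∧
    -- `CExtd'(E,R) ≅ (F₁(R)/≈₁) ∪ (F₂(R)/≈₂)`
    (∃ G : Quot (fun s s' : {F : FlagData R DR // IsFlag1 DR br F} =>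
              ∃ u₀ : R, FlagRel1Via DR br s.1 s'.1 u₀ 1) ⊕
           Quot (fun s s' : {F : FlagData R DR // IsFlag2 DR br F} =>
              ∃ u₀ : R, FlagRel2Via DR br s.1 s'.1 u₀ 1) →
           Quot (lcaCohom DR DQ br),
      Function.Bijective G ∧
      (∀ (s : {F : FlagData R DR // IsFlag1 DR br F}) (A : LCAOn R Q DR DQ br),
        IsFC1Of DR DQ br x s.1 A → G (Sum.inl (Quot.mk _ s)) = Quot.mk _ A) ∧
      (∀ (s : {F : FlagData R DR // IsFlag2 DR br F}) (A : LCAOn R Q DR DQ br),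
        IsFC2Of DR DQ br x s.1 A → G (Sum.inr (Quot.mk _ s)) = Quot.mk _ A)) := by
  have hinj : ∀ p q : Polynomial ℂ, Polynomial.aeval DQ p x = Polynomial.aeval DQ q x → p = q :=
    fun p q h => (hQfree (Polynomial.aeval DQ q x)).unique h rfl
  have hsurj : ∀ q : Q, ∃ p : Polynomial ℂ, Polynomial.aeval DQ p x = q :=
    fun q => (hQfree q).exists
  have ex1 : ∀ s : {F : FlagData R DR // IsFlag1 DR br F},
      ∃ A : LCAOn R Q DR DQ br, IsFC1Of DR DQ br x s.1 A := by
    rintro ⟨F, hF⟩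
    obtain ⟨A, hA⟩ := exists_LCA hLeib hinj hsurj F 0 (fun a => by simp) ((flag1_iff F).1 hF)
    exact ⟨A, (fc1_iff F A).2 hA⟩
  have ex2 : ∀ s : {F : FlagData R DR // IsFlag2 DR br F},
      ∃ A : LCAOn R Q DR DQ br, IsFC2Of DR DQ br x s.1 A := by
    rintro ⟨F, hF⟩
    obtain ⟨A, hA⟩ := exists_LCA hLeib hinj hsurj F _ (conf_ntwist F) ((flag2_iff F).1 hF).2
    exact ⟨A, (fc2_iff F A).2 hA⟩
  have k12 : ∀ (b : Prop) (s : {F : FlagData R DR // IsFlag1 DR br F})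
      (s' : {F : FlagData R DR // IsFlag2 DR br F}) (A A' : LCAOn R Q DR DQ br),
      IsFC1Of DR DQ br x s.1 A → IsFC2Of DR DQ br x s'.1 A' → ¬ isoRel b A A' := by
    intro b s s' A A' hA hA' h
    obtain ⟨u, β, -, -, H⟩ :=
      (isoRel_iff hinj hsurj ((fc1_iff _ _).1 hA) ((fc2_iff _ _).1 hA') b).1 h
    refine ((flag2_iff s'.1).1 s'.2).1 (LinearMap.ext fun a => ntwist_eq_zero ?_)
    exact (LinearMap.congr_fun H.eg a).symm
  have u1 : ∀ (s : {F : FlagData R DR // IsFlag1 DR br F}) (A A' : LCAOn R Q DR DQ br),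
      IsFC1Of DR DQ br x s.1 A → IsFC1Of DR DQ br x s.1 A' → A = A' :=
    fun s A A' h h' => LCA_unique hsurj ((fc1_iff _ _).1 h) ((fc1_iff _ _).1 h')
  have u2 : ∀ (s : {F : FlagData R DR // IsFlag2 DR br F}) (A A' : LCAOn R Q DR DQ br),
      IsFC2Of DR DQ br x s.1 A → IsFC2Of DR DQ br x s.1 A' → A = A' :=
    fun s A A' h h' => LCA_unique hsurj ((fc2_iff _ _).1 h) ((fc2_iff _ _).1 h')
  have sur : ∀ A : LCAOn R Q DR DQ br,
      (∃ s : {F : FlagData R DR // IsFlag1 DR br F}, IsFC1Of DR DQ br x s.1 A) ∨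
      ∃ s : {F : FlagData R DR // IsFlag2 DR br F}, IsFC2Of DR DQ br x s.1 A := by
    intro A
    obtain ⟨F, g, HG⟩ := exists_F hinj hsurj A.leib.bilin A.sub
    have H : Gen DR br F g :=
      gen_of_jac A.leib.bilin HG hinj (fun l m u v w => A.leib.jacobi l m u v w)
    have c1 : g = 0 → ∃ s : {F : FlagData R DR // IsFlag1 DR br F},
        IsFC1Of DR DQ br x s.1 A := by
      rintro rfl
      exact ⟨⟨F, (flag1_iff F).2 H⟩, (fc1_iff F A).2 HG⟩
    rcases dichotomy H with h | h
    · exact Or.inl (c1 h)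
    · by_cases hh : F.h = 0
      · exact Or.inl (c1 (by rw [h, hh, LinearMap.comp_zero]))
      · subst h
        exact Or.inr ⟨⟨F, (flag2_iff F).2 ⟨hh, H⟩⟩, (fc2_iff F A).2 HG⟩
  refine ⟨ex1, ex2, ?_, ?_⟩
  · rw [lcaEquiv_eq]
    refine assemble _ _ _ (isoRel_equiv _) (fun (s : {F : FlagData R DR // IsFlag1 DR br F}) A => IsFC1Of DR DQ br x s.1 A)
      (fun (s : {F : FlagData R DR // IsFlag2 DR br F}) A => IsFC2Of DR DQ br x s.1 A) ex1 ex2 u1 u2 ?_ ?_ (k12 _) sur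
    · intro s s' A A' h h'
      rw [isoRel_iff hinj hsurj ((fc1_iff _ _).1 h) ((fc1_iff _ _).1 h')]
      simp only [rel1_iff, false_imp_iff, true_and]
    · intro s s' A A' h h'
      rw [isoRel_iff hinj hsurj ((fc2_iff _ _).1 h) ((fc2_iff _ _).1 h')]
      simp only [rel2_iff, false_imp_iff, true_and]
  · rw [lcaCohom_eq]
    refine assemble _ _ _ (isoRel_equiv _) (fun (s : {F : FlagData R DR // IsFlag1 DR br F}) A => IsFC1Of DR DQ br x s.1 A)
      (fun (s : {F : FlagData R DR // IsFlag2 DR br F}) A => IsFC2Of DR DQ br x s.1 A) ex1 ex2 u1 u2 ?_ ?_ (k12 _) sur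
    · intro s s' A A' h h'
      rw [isoRel_iff hinj hsurj ((fc1_iff _ _).1 h) ((fc1_iff _ _).1 h')]
      simp only [rel1_iff]
      exact ⟨fun ⟨u, β, _, hb, H⟩ => ⟨u, hb trivial ▸ H⟩,
        fun ⟨u, H⟩ => ⟨u, 1, one_ne_zero, fun _ => rfl, H⟩⟩
    · intro s s' A A' h h'
      rw [isoRel_iff hinj hsurj ((fc2_iff _ _).1 h) ((fc2_iff _ _).1 h')]
      simp only [rel2_iff]
      exact ⟨fun ⟨u, β, _, hb, H⟩ => ⟨u, hb trivial ▸ H⟩,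
        fun ⟨u, H⟩ => ⟨u, 1, one_ne_zero, fun _ => rfl, H⟩⟩
end
end
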